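/- arXiv:1404.6901 — 7 statements merged into one kernel-verified Lean document; each statement's English description precedes it below -/
import Mathlib

section
/- Let A be an n×n real matrix and C an m×n real matrix such that the pair (A, C) is completely observable. Then there exists a constant c > 0, depending only on A and C, such that for every interval I = [a, a+T] with T a positive integer, every absolutely continuous function z : I → ℝ^n and every integrable function f : I → ℝ^n satisfying ż(t) = A z(t) + f(t) for almost every t ∈ I, one has ∫_I |z(t)| dt ≤ c ( ∫_I |C z(t)| dt + ∫_I |f(t)| dt ). -/
open MeasureTheory

/-- The pair `(A, C)` is completely observable: the only vector `v` with
`C A^k v = 0` for all `k = 0, …, n-1` is `v = 0`. -/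
def CompletelyObservable (n m : ℕ) (A : Matrix (Fin n) (Fin n) ℝ)
    (C : Matrix (Fin m) (Fin n) ℝ) : Prop :=
  ∀ v : Fin n → ℝ, (∀ k < n, (C * A ^ k).mulVec v = 0) → v = 0

section ObsHelpers

open Set

variable {E F : Type*} [NormedAddCommGroup E] [NormedSpace ℝ E] [FiniteDimensional ℝ E]
  [NormedAddCommGroup F] [NormedSpace ℝ F]

/-- The flow of `y' = L y`. -/
noncomputable def obsFlow (L : E →L[ℝ] E) (t : ℝ) : E →L[ℝ] E := NormedSpace.exp (t • L)

lemma obsFlow_hasDerivAt (L : E →L[ℝ] E) (v : E) (t : ℝ) :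
    HasDerivAt (fun s => obsFlow L s v) (L (obsFlow L t v)) t := by
  have : CompleteSpace E := FiniteDimensional.complete ℝ E
  have h := hasDerivAt_exp_smul_const' (𝕂 := ℝ) L t
  simpa [obsFlow] using h.clm_apply (hasDerivAt_const t v)

lemma obsFlow_continuous (L : E →L[ℝ] E) : Continuous (obsFlow L) := by
  have : CompleteSpace E := FiniteDimensional.complete ℝ E
  exact continuous_iff_continuousAt.2 fun t =>
    (hasDerivAt_exp_smul_const' (𝕂 := ℝ) L t).continuousAt

lemma obsFlow_zero (L : E →L[ℝ] E) : obsFlow L 0 = 1 := by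
  simp [obsFlow]

lemma obsFlow_joint (L : E →L[ℝ] E) : Continuous (fun p : E × ℝ => obsFlow L p.2 p.1) :=
  ((obsFlow_continuous L).comp continuous_snd).clm_apply continuous_fst

lemma obs_lower (L : E →L[ℝ] E) (D : E →L[ℝ] F)
    (hobs : ∀ v, (∀ k : ℕ, D ((L ^ k) v) = 0) → v = 0) (h : ℝ) (hh : 0 < h) :
    ∃ c > 0, ∀ v, c * ‖v‖ ≤ ∫ t in (0:ℝ)..h, ‖D (obsFlow L t v)‖ := by
  have hcont : Continuous (fun v : E => ∫ t in (0:ℝ)..h, ‖D (obsFlow L t v)‖) := by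
    apply intervalIntegral.continuous_parametric_intervalIntegral_of_continuous'
    exact (D.continuous.comp (obsFlow_joint L)).norm
  have hcv : ∀ v, Continuous (fun t => ‖D (obsFlow L t v)‖) := fun v =>
    (D.continuous.comp ((obsFlow_continuous L).clm_apply continuous_const)).norm
  have hnn : ∀ v, 0 ≤ ∫ t in (0:ℝ)..h, ‖D (obsFlow L t v)‖ := fun v =>
    intervalIntegral.integral_nonneg hh.le fun t _ => norm_nonneg _
  have hpos : ∀ v, v ≠ 0 → 0 < ∫ t in (0:ℝ)..h, ‖D (obsFlow L t v)‖ := by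
    intro v hv
    by_contra hcon
    apply hv
    have hzero : ∀ t ∈ Icc (0:ℝ) h, D (obsFlow L t v) = 0 := by
      intro t ht
      by_contra hne
      exact hcon (intervalIntegral.integral_pos hh (hcv v).continuousOn
        (fun x _ => norm_nonneg _) ⟨t, ht, norm_pos_iff.2 hne⟩)
    have hk : ∀ k : ℕ, ∀ t ∈ Icc (0:ℝ) h, D ((L ^ k) (obsFlow L t v)) = 0 := by
      intro k
      induction k with
      | zero => simpa using hzero
      | succ k ih =>
        intro t ht
        have h1 : HasDerivWithinAt (fun s => (D.comp (L ^ k)) (obsFlow L s v))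
            ((D.comp (L ^ k)) (L (obsFlow L t v))) (Icc 0 h) t :=
          ((D.comp (L ^ k)).hasFDerivAt.comp_hasDerivAt t
            (obsFlow_hasDerivAt L v t)).hasDerivWithinAt
        have h2 : HasDerivWithinAt (fun s => (D.comp (L ^ k)) (obsFlow L s v))
            0 (Icc 0 h) t :=
          (hasDerivWithinAt_const t (Icc 0 h) (0:F)).congr (fun s hs => ih s hs) (ih t ht)
        have := (uniqueDiffOn_Icc hh t ht).eq_deriv _ h1 h2
        rw [pow_succ]
        exact this
    apply hobs v
    intro k
    have := hk k 0 ⟨le_rfl, hh.le⟩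
    simpa [obsFlow_zero] using this
  have : ProperSpace E := FiniteDimensional.proper ℝ E
  rcases (Metric.sphere (0:E) 1).eq_empty_or_nonempty with he | hne
  · refine ⟨1, one_pos, fun v => ?_⟩
    by_cases hv : v = 0
    · subst hv; simp
    · exfalso
      have : (‖v‖⁻¹ • v) ∈ Metric.sphere (0:E) 1 := by
        simp [norm_smul, hv]
      rw [he] at this
      exact this
  · obtain ⟨u, hu, hmin⟩ := (isCompact_sphere (0:E) 1).exists_isMinOn hne hcont.continuousOn
    have hu0 : u ≠ 0 := by
      rintro rfl
      simp at hu
    refine ⟨_, hpos u hu0, fun v => ?_⟩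
    by_cases hv : v = 0
    · subst hv; simp
    · have hm : (‖v‖⁻¹ • v) ∈ Metric.sphere (0:E) 1 := by
        simp [norm_smul, hv]
      have h1 : (∫ t in (0:ℝ)..h, ‖D (obsFlow L t u)‖) ≤
        ∫ t in (0:ℝ)..h, ‖D (obsFlow L t (‖v‖⁻¹ • v))‖ := hmin hm
      have h2 : (∫ t in (0:ℝ)..h, ‖D (obsFlow L t (‖v‖⁻¹ • v))‖) =
          ‖v‖⁻¹ * ∫ t in (0:ℝ)..h, ‖D (obsFlow L t v)‖ := by
        rw [← intervalIntegral.integral_const_mul]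
        simp [norm_smul]
      rw [h2] at h1
      have hvp : 0 < ‖v‖ := norm_pos_iff.2 hv
      calc _ ≤ (‖v‖⁻¹ * ∫ t in (0:ℝ)..h, ‖D (obsFlow L t v)‖) * ‖v‖ := by gcongr
        _ = _ := by field_simp

lemma obs_local (L : E →L[ℝ] E) (D : E →L[ℝ] F)
    (hobs : ∀ v, (∀ k : ℕ, D ((L ^ k) v) = 0) → v = 0) (h : ℝ) (hh : 0 < h)
    (hL : ‖L‖ * h ≤ 1 / 2) :
    ∃ c > 0, ∀ (b : ℝ) (z f : ℝ → E), ContinuousOn z (Icc b (b + h)) →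
      IntervalIntegrable f volume b (b + h) →
      (∀ t ∈ Icc b (b + h), z t = z b + ∫ s in b..t, (L (z s) + f s)) →
      (∫ t in b..(b + h), ‖z t‖) ≤
        c * ((∫ t in b..(b + h), ‖D (z t)‖) + ∫ t in b..(b + h), ‖f t‖) := by
  have : CompleteSpace E := FiniteDimensional.complete ℝ E
  obtain ⟨c, hc, hlow⟩ := obs_lower L D hobs h hh
  obtain ⟨K, hK⟩ := (isCompact_Icc (a := (0:ℝ)) (b := h)).exists_bound_of_continuousOn
    (obsFlow_continuous L).continuousOn
  have hK0 : 0 ≤ K := (norm_nonneg _).trans (hK 0 ⟨le_rfl, hh.le⟩)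
  refine ⟨h * K / c * (1 + 2 * h * ‖D‖) + 2 * h, by positivity, ?_⟩
  intro b z f hz hf hzf
  have hbh : b ≤ b + h := by linarith
  set G := ∫ t in b..(b + h), ‖f t‖ with hG
  set Q := ∫ t in b..(b + h), ‖D (z t)‖ with hQ
  have hQ0 : 0 ≤ Q := intervalIntegral.integral_nonneg hbh fun _ _ => norm_nonneg _
  have hG0 : 0 ≤ G := intervalIntegral.integral_nonneg hbh fun _ _ => norm_nonneg _
  set y : ℝ → E := fun t => obsFlow L (t - b) (z b) with hy
  have hyc : Continuous y :=
    ((obsFlow_continuous L).comp (continuous_id.sub continuous_const)).clm_apply continuous_const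
  have hyd : ∀ t, HasDerivAt y (L (y t)) t := fun t =>
    (obsFlow_hasDerivAt L (z b) (t - b)).comp_sub_const t b
  have hyint : ∀ t, ∫ s in b..t, L (y s) = y t - z b := by
    intro t
    rw [intervalIntegral.integral_eq_sub_of_hasDerivAt (fun s _ => hyd s)
      ((L.continuous.comp hyc).intervalIntegrable _ _)]
    simp [hy, obsFlow_zero]
  have hwc : ContinuousOn (fun t => z t - y t) (Icc b (b + h)) := hz.sub hyc.continuousOn
  obtain ⟨t0, ht0, hmax⟩ := isCompact_Icc.exists_isMaxOn (nonempty_Icc.2 hbh) hwc.norm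
  have hM : ∀ t ∈ Icc b (b + h), ‖z t - y t‖ ≤ ‖z t0 - y t0‖ := fun t ht => hmax ht
  have hsub : uIcc b t0 ⊆ Icc b (b + h) := by
    rw [uIcc_of_le ht0.1]; exact Icc_subset_Icc_right ht0.2
  have hf0 : IntervalIntegrable f volume b t0 := hf.mono_set (by rwa [uIcc_of_le hbh])
  have hz0 : IntervalIntegrable (fun s => L (z s)) volume b t0 :=
    (L.continuous.comp_continuousOn (hz.mono hsub)).intervalIntegrable
  have hM2 : ‖z t0 - y t0‖ ≤ 2 * G := by
    have e1 : z t0 - y t0 = ∫ s in b..t0, (L (z s - y s) + f s) := by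
      have : (∫ s in b..t0, (L (z s - y s) + f s)) =
          (∫ s in b..t0, ((L (z s) + f s) - L (y s))) := by
        congr 1; ext s; rw [map_sub]; abel
      have hLy : IntervalIntegrable (fun s => L (y s)) volume b t0 :=
        (L.continuous.comp hyc).intervalIntegrable _ _
      rw [this, intervalIntegral.integral_sub (hz0.add hf0) hLy, hyint, hzf t0 ht0]
      abel
    have e2 : ‖z t0 - y t0‖ ≤ ∫ s in b..t0, (‖L‖ * ‖z t0 - y t0‖ + ‖f s‖) := by
      conv_lhs => rw [e1]
      apply intervalIntegral.norm_integral_le_of_norm_le ht0.1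
      · refine Filter.Eventually.of_forall fun s hs => ?_
        refine (norm_add_le _ _).trans ?_
        gcongr
        refine (L.le_opNorm _).trans ?_
        gcongr
        exact hM s ⟨hs.1.le, hs.2.trans ht0.2⟩
      · exact intervalIntegrable_const.add hf0.norm
    rw [intervalIntegral.integral_add intervalIntegrable_const hf0.norm,
      intervalIntegral.integral_const, smul_eq_mul] at e2
    have e3 : ∫ s in b..t0, ‖f s‖ ≤ G :=
      intervalIntegral.integral_mono_interval le_rfl ht0.1 ht0.2
        (Filter.Eventually.of_forall fun _ => norm_nonneg _) hf.norm
    have e4 : (t0 - b) * (‖L‖ * ‖z t0 - y t0‖) ≤ h * (‖L‖ * ‖z t0 - y t0‖) := by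
      gcongr
      linarith [ht0.2]
    have e5 := mul_le_mul_of_nonneg_right hL (norm_nonneg (z t0 - y t0))
    nlinarith
  have hw : ∀ t ∈ Icc b (b + h), ‖z t - y t‖ ≤ 2 * G := fun t ht => (hM t ht).trans hM2
  have hzi : IntervalIntegrable (fun t => ‖z t‖) volume b (b + h) := by
    apply ContinuousOn.intervalIntegrable
    rw [uIcc_of_le hbh]; exact hz.norm
  have hDzi : IntervalIntegrable (fun t => ‖D (z t)‖) volume b (b + h) := by
    apply ContinuousOn.intervalIntegrable
    rw [uIcc_of_le hbh]; exact (D.continuous.comp_continuousOn hz).norm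
  have s1 : (∫ t in b..(b + h), ‖z t‖) ≤ h * (K * ‖z b‖ + 2 * G) := by
    have : (∫ t in b..(b + h), ‖z t‖) ≤ ∫ t in b..(b + h), (K * ‖z b‖ + 2 * G) := by
      apply intervalIntegral.integral_mono_on hbh hzi intervalIntegrable_const
      intro t ht
      have a1 : ‖y t‖ ≤ K * ‖z b‖ := by
        refine (ContinuousLinearMap.le_opNorm _ _).trans ?_
        gcongr
        exact hK _ ⟨by linarith [ht.1], by linarith [ht.2]⟩
      calc ‖z t‖ = ‖y t + (z t - y t)‖ := by congr 1; abel
        _ ≤ _ := (norm_add_le _ _).trans (add_le_add a1 (hw t ht))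
    rw [intervalIntegral.integral_const, smul_eq_mul, add_sub_cancel_left] at this
    exact this
  have s2 : c * ‖z b‖ ≤ Q + 2 * h * ‖D‖ * G := by
    refine (hlow (z b)).trans ?_
    have e : (∫ t in (0:ℝ)..h, ‖D (obsFlow L t (z b))‖) = ∫ t in b..(b + h), ‖D (y t)‖ := by
      have := intervalIntegral.integral_comp_sub_right (a := b) (b := b + h)
        (fun t => ‖D (obsFlow L t (z b))‖) b
      simp only [sub_self, add_sub_cancel_left] at this
      exact this.symm
    rw [e]
    have : (∫ t in b..(b + h), ‖D (y t)‖) ≤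
        ∫ t in b..(b + h), (‖D (z t)‖ + ‖D‖ * (2 * G)) := by
      apply intervalIntegral.integral_mono_on hbh
        ((D.continuous.comp hyc).norm.intervalIntegrable _ _)
        (hDzi.add intervalIntegrable_const)
      intro t ht
      calc ‖D (y t)‖ = ‖D (z t) - D (z t - y t)‖ := by congr 1; rw [map_sub]; abel
        _ ≤ ‖D (z t)‖ + ‖D (z t - y t)‖ := norm_sub_le _ _
        _ ≤ _ := by
          gcongr
          refine (D.le_opNorm _).trans ?_
          gcongr
          exact hw t ht
    refine this.trans (le_of_eq ?_)
    rw [intervalIntegral.integral_add hDzi intervalIntegrable_const,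
      intervalIntegral.integral_const, smul_eq_mul]
    ring
  have s3 : ‖z b‖ ≤ (Q + 2 * h * ‖D‖ * G) / c := by
    rw [le_div_iff₀ hc]; linarith
  calc _ ≤ _ := s1
    _ ≤ h * (K * ((Q + 2 * h * ‖D‖ * G) / c) + 2 * G) := by gcongr
    _ = h * K / c * (Q + 2 * h * ‖D‖ * G) + 2 * h * G := by ring
    _ ≤ h * K / c * ((1 + 2 * h * ‖D‖) * (Q + G)) + 2 * h * (Q + G) := by
      have : 0 ≤ 2 * h * ‖D‖ := by positivity
      gcongr
      · nlinarith [mul_nonneg this hQ0]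
      · linarith
    _ = _ := by ring

lemma obs_global (L : E →L[ℝ] E) (D : E →L[ℝ] F)
    (hobs : ∀ v, (∀ k : ℕ, D ((L ^ k) v) = 0) → v = 0) :
    ∃ c > 0, ∀ (a : ℝ) (T : ℕ) (z f : ℝ → E), ContinuousOn z (Icc a (a + (T:ℝ))) →
      IntegrableOn f (Icc a (a + (T:ℝ))) →
      (∀ t ∈ Icc a (a + (T:ℝ)), z t = z a + ∫ s in a..t, (L (z s) + f s)) →
      (∫ t in Icc a (a + (T:ℝ)), ‖z t‖) ≤
        c * ((∫ t in Icc a (a + (T:ℝ)), ‖D (z t)‖) + ∫ t in Icc a (a + (T:ℝ)), ‖f t‖) := by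
  obtain ⟨N, hN⟩ := exists_nat_gt (2 * ‖L‖)
  have hN0 : (0:ℝ) < N := lt_of_le_of_lt (by positivity) hN
  have hh : (0:ℝ) < 1 / N := by positivity
  obtain ⟨c, hc, H⟩ := obs_local L D hobs (1 / N) hh (by
    rw [mul_one_div, div_le_iff₀ hN0]; linarith)
  refine ⟨c, hc, ?_⟩
  intro a T z f hz hf hzf
  have hT0 : (0:ℝ) ≤ T := Nat.cast_nonneg T
  have haT : a ≤ a + T := by linarith
  let p : ℕ → ℝ := fun k => a + k * (1 / N)
  have hp0 : p 0 = a := by simp [p]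
  have hpS : ∀ k, p (k + 1) = p k + 1 / N := fun k => by simp only [p]; push_cast; ring
  have hpT : p (N * T) = a + T := by simp only [p]; push_cast; field_simp
  have hpmono : ∀ i j, i ≤ j → p i ≤ p j := fun i j hij => by
    simp only [p]; gcongr
  have hpsub : ∀ k < N * T, Icc (p k) (p (k + 1)) ⊆ Icc a (a + T) := fun k hk => by
    rw [← hpT]
    exact Icc_subset_Icc (hp0 ▸ hpmono 0 k (Nat.zero_le _)) (hpmono _ _ hk)
  have key : ∀ g : ℝ → ℝ, IntegrableOn g (Icc a (a + (T:ℝ))) →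
      ∫ t in Icc a (a + (T:ℝ)), g t =
        ∑ k ∈ Finset.range (N * T), ∫ t in p k..p (k + 1), g t := by
    intro g hg
    rw [intervalIntegral.sum_integral_adjacent_intervals, hp0, hpT,
      intervalIntegral.integral_of_le haT, integral_Icc_eq_integral_Ioc]
    intro k hk
    refine (hg.mono_set ?_).intervalIntegrable
    rw [uIcc_of_le (hpmono _ _ (Nat.le_succ k))]
    exact hpsub k hk
  have hDz : IntegrableOn (fun t => ‖D (z t)‖) (Icc a (a + (T:ℝ))) :=
    (D.continuous.comp_continuousOn hz).norm.integrableOn_Icc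
  rw [key _ hz.norm.integrableOn_Icc, key _ hDz,
    key _ hf.norm, ← Finset.sum_add_distrib, Finset.mul_sum]
  apply Finset.sum_le_sum
  intro k hk
  have hk' := Finset.mem_range.1 hk
  have hsub := hpsub k hk'
  rw [hpS] at hsub ⊢
  have hle : p k ≤ p k + 1 / N := by linarith
  have hpk : p k ∈ Icc a (a + (T:ℝ)) := hsub ⟨le_rfl, hle⟩
  apply H (p k) z f (hz.mono hsub)
  · refine (hf.mono_set ?_).intervalIntegrable
    rwa [uIcc_of_le hle]
  · intro t ht
    have hg : IntegrableOn (fun s => L (z s) + f s) (Icc a (a + (T:ℝ))) :=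
      (L.continuous.comp_continuousOn hz).integrableOn_Icc.add hf
    have ht' := hsub ht
    rw [hzf t ht', hzf (p k) hpk, add_assoc,
      intervalIntegral.integral_add_adjacent_intervals]
    · refine (hg.mono_set ?_).intervalIntegrable
      rw [uIcc_of_le hpk.1]; exact Icc_subset_Icc_right hpk.2
    · refine (hg.mono_set ?_).intervalIntegrable
      rw [uIcc_of_le ht.1]; exact Icc_subset_Icc hpk.1 ht'.2

end ObsHelpers

/-- **Observability estimate on intervals of integer length.**
If `(A, C)` is completely observable, there is `c > 0` (depending only on `A` and `C`)
such that for every interval `I = [a, a + T]` with `T` a positive integer, every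
absolutely continuous `z : I → ℝⁿ` (encoded by the integral identity together with
continuity) and every integrable `f` with `ż = A z + f` a.e. on `I`, one has
`∫_I ‖z‖ ≤ c (∫_I ‖C z‖ + ∫_I ‖f‖)`. -/
theorem observability_estimate_integer_length
    (n m : ℕ) (A : Matrix (Fin n) (Fin n) ℝ) (C : Matrix (Fin m) (Fin n) ℝ)
    (hobs : CompletelyObservable n m A C) :
    ∃ c > 0, ∀ (a : ℝ) (T : ℕ), 0 < T →
      ∀ (z f : ℝ → EuclideanSpace ℝ (Fin n)),
        ContinuousOn z (Set.Icc a (a + (T : ℝ))) →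
        IntegrableOn f (Set.Icc a (a + (T : ℝ))) →
        (∀ t ∈ Set.Icc a (a + (T : ℝ)),
          z t = z a + ∫ s in a..t, (Matrix.toEuclideanLin A (z s) + f s)) →
        (∫ t in Set.Icc a (a + (T : ℝ)), ‖z t‖) ≤
          c * ((∫ t in Set.Icc a (a + (T : ℝ)), ‖Matrix.toEuclideanLin C (z t)‖) +
               ∫ t in Set.Icc a (a + (T : ℝ)), ‖f t‖) := by
  obtain ⟨c, hc, H⟩ := obs_global (LinearMap.toContinuousLinearMap (Matrix.toEuclideanLin A))
    (LinearMap.toContinuousLinearMap (Matrix.toEuclideanLin C)) (by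
      intro v hv
      have hpow : ∀ k : ℕ, ∀ v : EuclideanSpace ℝ (Fin n),
          ((LinearMap.toContinuousLinearMap (Matrix.toEuclideanLin A)) ^ k) v =
            WithLp.toLp 2 ((A ^ k).mulVec v.ofLp) := by
        intro k
        induction k with
        | zero => intro v; simp
        | succ k ih =>
          intro v
          rw [pow_succ, mul_apply_eq_comp, ih, pow_succ, ← Matrix.mulVec_mulVec]
          rfl
      have h0 : v.ofLp = 0 := by
        apply hobs
        intro k _
        have := hv k
        rw [hpow] at this
        rw [← Matrix.mulVec_mulVec]
        exact congrArg WithLp.ofLp this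
      ext i
      simp [h0])
  exact ⟨c, hc, fun a T _ z f h1 h2 h3 => H a T z f h1 h2 h3⟩
end

section
/- Let A be an n×n real matrix and C an m×n real matrix such that the pair (A, C) is completely observable, and let δ > 0. Then there exists a constant c > 0, depending only on A, C and δ, such that for every interval I of length at least δ, every absolutely continuous function z : I → ℝ^n and every integrable f : I → ℝ^n satisfying ż(t) = A z(t) + f(t) for almost every t ∈ I, one has ∫_I |z(t)| dt ≤ c ( ∫_I |C z(t)| dt + ∫_I |f(t)| dt ). -/
open MeasureTheory

section helpers
open Set intervalIntegral

lemma obs_gronwall {u : ℝ → ℝ} {a b α K : ℝ} (hK : 0 < K) (hu : ContinuousOn u (Icc a b))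
    (h0 : ∀ t ∈ Icc a b, 0 ≤ u t)
    (h : ∀ t ∈ Icc a b, u t ≤ α + K * ∫ s in a..t, u s) :
    ∀ t ∈ Icc a b, u t ≤ α * Real.exp (K * (t - a)) := by
  intro t ht
  have hab : a ≤ b := ht.1.trans ht.2
  have hui : ∀ x ∈ Icc a b, IntervalIntegrable u volume a x := fun x hx =>
    (hu.mono (Icc_subset_Icc_right hx.2)).intervalIntegrable_of_Icc hx.1
  have key := le_gronwallBound_of_liminf_deriv_right_le (f := fun x => ∫ s in a..x, u s)
    (f' := u) (δ := 0) (K := K) (ε := α) (a := a) (b := b)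
    (by
      have := intervalIntegral.continuousOn_primitive_interval (μ := volume) (f := u) (a := a)
        (b := b) (by rw [uIcc_of_le hab]; exact hu.integrableOn_Icc)
      rwa [uIcc_of_le hab] at this)
    (by
      intro x hx r hr
      have hx' : x ∈ Icc a b := ⟨hx.1, hx.2.le⟩
      have hd : HasDerivWithinAt (fun x => ∫ s in a..x, u s) (u x) (Ici x) x := by
        have hioc : Icc a b ∈ nhdsWithin x (Ioi x) :=
          Filter.mem_of_superset (Ioc_mem_nhdsGT hx.2)
            (fun y hy => ⟨hx.1.trans hy.1.le, hy.2⟩)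
        refine intervalIntegral.integral_hasDerivWithinAt_right (hui x hx') (t := Ioi x) ?_ ?_
        · exact ⟨Icc a b, hioc, hu.aestronglyMeasurable measurableSet_Icc⟩
        · exact (hu x hx').mono_of_mem_nhdsWithin hioc
      have := hd.liminf_right_slope_le hr
      simpa [slope_def_field, div_eq_inv_mul] using this)
    (by simp)
    (by
      intro x hx
      have := h x ⟨hx.1, hx.2.le⟩
      linarith) t ht
  rw [gronwallBound_of_K_ne_0 hK.ne'] at key
  have h1 := h t ht
  have h2 := mul_le_mul_of_nonneg_left key hK.le
  have h3 : K * (0 * Real.exp (K * (t - a)) + α / K * (Real.exp (K * (t - a)) - 1))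
      = α * Real.exp (K * (t - a)) - α := by field_simp; ring
  simp only at h2
  linarith

variable {E F : Type*} [NormedAddCommGroup E] [NormedSpace ℝ E] [FiniteDimensional ℝ E]
  [NormedAddCommGroup F] [NormedSpace ℝ F]

lemma obs_growth (L : E →L[ℝ] E) {a b : ℝ} (hab : a ≤ b) {z f : ℝ → E}
    (hz : ContinuousOn z (Icc a b)) (hf : IntegrableOn f (Icc a b))
    (h : ∀ t ∈ Icc a b, z t = z a + ∫ s in a..t, (L (z s) + f s)) :
    ∀ t ∈ Icc a b, ‖z t‖ ≤
      (‖z a‖ + ∫ s in a..b, ‖f s‖) * Real.exp ((‖L‖ + 1) * (b - a)) := by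
  intro t ht
  have hK : 0 < ‖L‖ + 1 := by positivity
  have hfi : ∀ x ∈ Icc a b, IntervalIntegrable f volume a x := fun x hx =>
    (intervalIntegrable_iff_integrableOn_Icc_of_le hx.1).2
      (hf.mono_set (Icc_subset_Icc_right hx.2))
  have hzi : ∀ x ∈ Icc a b, IntervalIntegrable z volume a x := fun x hx =>
    (hz.mono (Icc_subset_Icc_right hx.2)).intervalIntegrable_of_Icc hx.1
  have hα : 0 ≤ ∫ s in a..b, ‖f s‖ := intervalIntegral.integral_nonneg hab (by simp)
  refine (obs_gronwall (α := ‖z a‖ + ∫ s in a..b, ‖f s‖) hK hz.norm (by simp) ?_ t ht).trans ?_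
  · intro x hx
    have h1 : ‖∫ s in a..x, (L (z s) + f s)‖ ≤ ∫ s in a..x, ((‖L‖ + 1) * ‖z s‖ + ‖f s‖) := by
      refine intervalIntegral.norm_integral_le_of_norm_le hx.1 (Filter.Eventually.of_forall ?_) ?_
      · intro s _
        refine (norm_add_le _ _).trans ?_
        gcongr
        refine (L.le_opNorm _).trans ?_
        gcongr
        linarith
      · exact ((hzi x hx).norm.const_mul _).add (hfi x hx).norm
    rw [intervalIntegral.integral_add ((hzi x hx).norm.const_mul _) (hfi x hx).norm,
      intervalIntegral.integral_const_mul] at h1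
    have h2 : ∫ s in a..x, ‖f s‖ ≤ ∫ s in a..b, ‖f s‖ :=
      intervalIntegral.integral_mono_interval le_rfl hx.1 hx.2
        (Filter.Eventually.of_forall (by simp)) (hfi b ⟨hab, le_rfl⟩).norm
    calc ‖z x‖ = ‖z a + ∫ s in a..x, (L (z s) + f s)‖ := by rw [← h x hx]
      _ ≤ _ := norm_add_le _ _
      _ ≤ _ := by linarith
  · gcongr
    exact ht.2

lemma obs_hasDerivAt (L : E →L[ℝ] E) (v : E) (a t : ℝ) :
    HasDerivAt (fun t : ℝ => (NormedSpace.exp ((t - a) • L)) v)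
      (L ((NormedSpace.exp ((t - a) • L)) v)) t := by
  have : CompleteSpace E := FiniteDimensional.complete ℝ E
  have h := (hasDerivAt_exp_smul_const' (𝕂 := ℝ) L (t - a)).comp_sub_const t a
  exact h.clm_apply (hasDerivAt_const t v) |>.congr_deriv (by simp)

lemma obs_pos (L : E →L[ℝ] E) (K : E →L[ℝ] F)
    (hobs : ∀ v, (∀ k : ℕ, K ((L ^ k) v) = 0) → v = 0) {δ : ℝ} (hδ : 0 < δ) :
    ∃ c > 0, ∀ v : E, ‖v‖ ≤ c * ∫ t in (0:ℝ)..δ, ‖K ((NormedSpace.exp (t • L)) v)‖ := by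
  have : CompleteSpace E := FiniteDimensional.complete ℝ E
  have hd : ∀ v t, HasDerivAt (fun t : ℝ => (NormedSpace.exp (t • L)) v)
      (L ((NormedSpace.exp (t • L)) v)) t := by
    intro v t
    simpa using obs_hasDerivAt L v 0 t
  have hcexp : Continuous fun t : ℝ => (NormedSpace.exp (t • L) : E →L[ℝ] E) :=
    continuous_iff_continuousAt.2 fun t =>
      (hasDerivAt_exp_smul_const' (𝕂 := ℝ) L t).continuousAt
  let N : E → ℝ := fun v => ∫ t in (0:ℝ)..δ, ‖K ((NormedSpace.exp (t • L)) v)‖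
  have hN : Continuous N := by
    refine intervalIntegral.continuous_parametric_intervalIntegral_of_continuous' ?_ 0 δ
    have : Continuous fun p : E × ℝ => ‖K ((NormedSpace.exp (p.2 • L) : E →L[ℝ] E) p.1)‖ :=
      (K.continuous.comp ((hcexp.comp continuous_snd).clm_apply continuous_fst)).norm
    exact this
  have hpos : ∀ v, v ≠ 0 → 0 < N v := by
    intro v hv
    have hc : Continuous fun t : ℝ => ‖K ((NormedSpace.exp (t • L)) v)‖ :=
      (K.continuous.comp (hcexp.clm_apply continuous_const)).norm
    refine intervalIntegral.integral_pos hδ hc.continuousOn (by simp) ?_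
    by_contra hcon
    push Not at hcon
    apply hv
    have hz : ∀ k : ℕ, ∀ t ∈ Ioo 0 δ, K ((L ^ k) ((NormedSpace.exp (t • L)) v)) = 0 := by
      intro k
      induction k with
      | zero =>
        intro t ht
        simpa using hcon t ⟨ht.1.le, ht.2.le⟩
      | succ k ih =>
        intro t ht
        have h1 : HasDerivAt (fun t : ℝ => K ((L ^ k) ((NormedSpace.exp (t • L)) v)))
            (K ((L ^ k) (L ((NormedSpace.exp (t • L)) v)))) t :=
          (K.comp (L ^ k)).hasFDerivAt.comp_hasDerivAt t (hd v t)
        have h2 : HasDerivAt (fun t : ℝ => K ((L ^ k) ((NormedSpace.exp (t • L)) v))) 0 t := by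
          refine (hasDerivAt_const t (0:F)).congr_of_eventuallyEq ?_
          filter_upwards [isOpen_Ioo.mem_nhds ht] with s hs using ih s hs
        rw [pow_succ]
        exact h1.unique h2
    have h0 := hobs _ (fun k => hz k (δ / 2) ⟨by linarith, by linarith⟩)
    letI : NormedAlgebra ℚ (E →L[ℝ] E) := NormedAlgebra.restrictScalars ℚ ℝ _
    obtain ⟨w, hw⟩ := NormedSpace.isUnit_exp ((δ / 2) • L)
    rw [← hw] at h0
    have : ((↑w⁻¹ : E →L[ℝ] E) * (↑w : E →L[ℝ] E)) v = 0 := by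
      rw [ContinuousLinearMap.mul_apply, h0, map_zero]
    simpa using this
  have hhom : ∀ (r : ℝ) v, N (r • v) = |r| * N v := by
    intro r v
    simp only [N, map_smul, norm_smul, Real.norm_eq_abs, intervalIntegral.integral_const_mul]
  rcases (Metric.sphere (0:E) 1).eq_empty_or_nonempty with he | hne
  · refine ⟨1, one_pos, fun v => ?_⟩
    have hv : v = 0 := by
      by_contra hv
      have : (‖v‖⁻¹ • v) ∈ Metric.sphere (0:E) 1 := by
        simp [norm_smul, inv_mul_cancel₀ (norm_ne_zero_iff.2 hv)]
      simp [he] at this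
    simp [hv]
  · obtain ⟨x, hx, hmin⟩ := (isCompact_sphere (0:E) 1).exists_isMinOn hne hN.continuousOn
    have hx0 : x ≠ 0 := by
      rintro rfl
      simp at hx
    have hNx := hpos x hx0
    refine ⟨(N x)⁻¹, inv_pos.2 hNx, fun v => ?_⟩
    change ‖v‖ ≤ (N x)⁻¹ * N v
    by_cases hv : v = 0
    · subst hv
      have := hhom 0 0
      simp at this
      simp [this]
    · have hvn : 0 < ‖v‖ := norm_pos_iff.2 hv
      have hm : (‖v‖⁻¹ • v) ∈ Metric.sphere (0:E) 1 := by
        simp [norm_smul, inv_mul_cancel₀ hvn.ne']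
      have h1 : N x ≤ N (‖v‖⁻¹ • v) := hmin hm
      rw [hhom, abs_of_pos (inv_pos.2 hvn)] at h1
      rw [inv_mul_eq_div, le_div_iff₀ hNx]
      rw [inv_mul_eq_div, le_div_iff₀ hvn] at h1
      linarith

lemma obs_piece (L : E →L[ℝ] E) (K : E →L[ℝ] F)
    (hobs : ∀ v, (∀ k : ℕ, K ((L ^ k) v) = 0) → v = 0) {δ : ℝ} (hδ : 0 < δ) :
    ∃ c > 0, ∀ a b : ℝ, δ ≤ b - a → b - a ≤ 2 * δ → ∀ z f : ℝ → E,
      ContinuousOn z (Icc a b) → IntegrableOn f (Icc a b) →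
      (∀ t ∈ Icc a b, z t = z a + ∫ s in a..t, (L (z s) + f s)) →
      ∫ t in a..b, ‖z t‖ ≤ c * ((∫ t in a..b, ‖K (z t)‖) + ∫ t in a..b, ‖f t‖) := by
  have : CompleteSpace E := FiniteDimensional.complete ℝ E
  obtain ⟨c₀, hc₀, hN⟩ := obs_pos L K hobs hδ
  let M := Real.exp ((‖L‖ + 1) * (2 * δ))
  have hM : 0 < M := Real.exp_pos _
  refine ⟨M * (c₀ * (1 + δ * (‖K‖ * M)) + 1) * (2 * δ), by positivity, ?_⟩
  intro a b hab1 hab2 z f hz hf h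
  have hab : a ≤ b := by linarith
  have hfi : IntervalIntegrable f volume a b :=
    (intervalIntegrable_iff_integrableOn_Icc_of_le hab).2 hf
  have hfi' : ∀ x ∈ Icc a b, IntervalIntegrable f volume a x := fun x hx =>
    (intervalIntegrable_iff_integrableOn_Icc_of_le hx.1).2
      (hf.mono_set (Icc_subset_Icc_right hx.2))
  have hMb : Real.exp ((‖L‖ + 1) * (b - a)) ≤ M := by
    apply Real.exp_le_exp.2; gcongr
  set P := ∫ t in a..b, ‖f t‖ with hP
  set Y := ∫ t in a..b, ‖K (z t)‖ with hY
  have hP0 : 0 ≤ P := intervalIntegral.integral_nonneg hab (by simp)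
  have hY0 : 0 ≤ Y := intervalIntegral.integral_nonneg hab (by simp)
  let x : ℝ → E := fun t => (NormedSpace.exp ((t - a) • L)) (z a)
  have hx : ∀ t, HasDerivAt x (L (x t)) t := fun t => obs_hasDerivAt L (z a) a t
  have hxc : Continuous x := continuous_iff_continuousAt.2 fun t => (hx t).continuousAt
  have hxa : x a = z a := by simp [x]
  have hxeq : ∀ t, ∫ s in a..t, L (x s) = x t - x a := fun t =>
    intervalIntegral.integral_eq_sub_of_hasDerivAt (fun s _ => hx s)
      ((L.continuous.comp hxc).intervalIntegrable _ _)
  have hw : ∀ t ∈ Icc a b, ‖z t - x t‖ ≤ P * M := by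
    intro t ht
    have := obs_growth L hab (z := fun t => z t - x t) (f := f) (hz.sub hxc.continuousOn) hf
      (by
        intro t ht
        have hzi : IntervalIntegrable (fun s => L (z s) + f s) volume a t :=
          ((L.continuous.comp_continuousOn
            (hz.mono (Icc_subset_Icc_right ht.2))).intervalIntegrable_of_Icc ht.1).add
            (hfi' t ht)
        have h1 : ∫ s in a..t, (L (z s - x s) + f s)
            = (∫ s in a..t, (L (z s) + f s)) - ∫ s in a..t, L (x s) := by
          have hLx : IntervalIntegrable (fun s => L (x s)) volume a t :=
            (L.continuous.comp hxc).intervalIntegrable _ _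
          rw [← intervalIntegral.integral_sub hzi hLx]
          congr 1
          ext s
          rw [map_sub]; abel
        rw [h1, hxeq, hxa, sub_self, zero_add]
        nth_rewrite 1 [h t ht]
        abel) t ht
    simp only [hxa, sub_self, norm_zero, zero_add] at this
    exact this.trans (by gcongr)
  have hδb : a + δ ≤ b := by linarith
  have hKz : ContinuousOn (fun t => ‖K (z t)‖) (Icc a b) :=
    (K.continuous.comp_continuousOn hz).norm
  have hKzi : IntervalIntegrable (fun t => ‖K (z t)‖) volume a b :=
    hKz.intervalIntegrable_of_Icc hab
  have hKzi' : IntervalIntegrable (fun t => ‖K (z t)‖) volume a (a + δ) :=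
    (hKz.mono (Icc_subset_Icc_right hδb)).intervalIntegrable_of_Icc (by linarith)
  have hza : ‖z a‖ ≤ c₀ * (Y + δ * (‖K‖ * (P * M))) := by
    refine (hN (z a)).trans ?_
    gcongr
    have e1 : ∫ t in (0:ℝ)..δ, ‖K ((NormedSpace.exp (t • L)) (z a))‖
        = ∫ t in a..(a + δ), ‖K (x t)‖ := by
      have := intervalIntegral.integral_comp_sub_right (a := a) (b := a + δ)
        (fun t : ℝ => ‖K ((NormedSpace.exp (t • L)) (z a))‖) a
      simp only [sub_self, add_sub_cancel_left] at this
      exact this.symm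
    rw [e1]
    have e2 : ∫ t in a..(a + δ), ‖K (x t)‖
        ≤ ∫ t in a..(a + δ), (‖K (z t)‖ + ‖K‖ * (P * M)) := by
      refine intervalIntegral.integral_mono_on (by linarith)
        ((K.continuous.comp hxc).norm.intervalIntegrable _ _)
        (hKzi'.add intervalIntegrable_const) ?_
      intro t ht
      have : K (x t) = K (z t) - K (z t - x t) := by rw [map_sub]; abel
      rw [this]
      refine (norm_sub_le _ _).trans ?_
      gcongr
      refine (K.le_opNorm _).trans ?_
      gcongr
      exact hw t ⟨ht.1, ht.2.trans hδb⟩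
    refine e2.trans ?_
    rw [intervalIntegral.integral_add hKzi' intervalIntegrable_const,
      intervalIntegral.integral_const, smul_eq_mul, add_sub_cancel_left]
    gcongr
    exact intervalIntegral.integral_mono_interval le_rfl (by linarith) hδb
        (Filter.Eventually.of_forall (by simp)) hKzi
  have hzt : ∀ t ∈ Icc a b, ‖z t‖ ≤ (‖z a‖ + P) * M := by
    intro t ht
    refine (obs_growth L hab hz hf h t ht).trans ?_
    gcongr
  have hfin : ∫ t in a..b, ‖z t‖ ≤ ∫ t in a..b, (‖z a‖ + P) * M :=
    intervalIntegral.integral_mono_on hab (hz.norm.intervalIntegrable_of_Icc hab)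
      intervalIntegrable_const hzt
  rw [intervalIntegral.integral_const, smul_eq_mul] at hfin
  have hS : ‖z a‖ + P ≤ (c₀ * (1 + δ * (‖K‖ * M)) + 1) * (Y + P) := by
    have h1 : 0 ≤ δ * (‖K‖ * M) * Y := by positivity
    have h2 : c₀ * (Y + δ * (‖K‖ * (P * M))) ≤ c₀ * ((1 + δ * (‖K‖ * M)) * (Y + P)) := by
      gcongr
      nlinarith
    nlinarith
  calc ∫ t in a..b, ‖z t‖ ≤ (b - a) * ((‖z a‖ + P) * M) := hfin
    _ ≤ (2 * δ) * (((c₀ * (1 + δ * (‖K‖ * M)) + 1) * (Y + P)) * M) := by gcongr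
    _ = _ := by ring

lemma obs_all (L : E →L[ℝ] E) (K : E →L[ℝ] F)
    (hobs : ∀ v, (∀ k : ℕ, K ((L ^ k) v) = 0) → v = 0) {δ : ℝ} (hδ : 0 < δ) :
    ∃ c > 0, ∀ a b : ℝ, δ ≤ b - a → ∀ z f : ℝ → E,
      ContinuousOn z (Icc a b) → IntegrableOn f (Icc a b) →
      (∀ t ∈ Icc a b, z t = z a + ∫ s in a..t, (L (z s) + f s)) →
      ∫ t in a..b, ‖z t‖ ≤ c * ((∫ t in a..b, ‖K (z t)‖) + ∫ t in a..b, ‖f t‖) := by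
  obtain ⟨c, hc, hpiece⟩ := obs_piece L K hobs hδ
  refine ⟨c, hc, ?_⟩
  have main : ∀ N : ℕ, ∀ a b : ℝ, δ ≤ b - a → b - a ≤ (N + 2) * δ → ∀ z f : ℝ → E,
      ContinuousOn z (Icc a b) → IntegrableOn f (Icc a b) →
      (∀ t ∈ Icc a b, z t = z a + ∫ s in a..t, (L (z s) + f s)) →
      ∫ t in a..b, ‖z t‖ ≤ c * ((∫ t in a..b, ‖K (z t)‖) + ∫ t in a..b, ‖f t‖) := by
    intro N
    induction N with
    | zero =>
      intro a b h1 h2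
      exact hpiece a b h1 (by simpa using h2)
    | succ N ih =>
      intro a b h1 h2 z f hz hf h
      by_cases hle : b - a ≤ 2 * δ
      · exact hpiece a b h1 hle z f hz hf h
      push Not at hle
      push_cast at h2
      set d := a + δ with hd
      have had : a ≤ d := by linarith
      have hdb : d ≤ b := by linarith
      have s1 : Icc a d ⊆ Icc a b := Icc_subset_Icc_right hdb
      have s2 : Icc d b ⊆ Icc a b := Icc_subset_Icc_left had
      have hi : ∀ {g : ℝ → ℝ}, IntegrableOn g (Icc a b) →
          IntervalIntegrable g volume a d ∧ IntervalIntegrable g volume d b :=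
        fun hg => ⟨(intervalIntegrable_iff_integrableOn_Icc_of_le had).2 (hg.mono_set s1),
          (intervalIntegrable_iff_integrableOn_Icc_of_le hdb).2 (hg.mono_set s2)⟩
      have hLzf : IntegrableOn (fun s => L (z s) + f s) (Icc a b) :=
        (L.continuous.comp_continuousOn hz).integrableOn_Icc.add hf
      have p1 := hpiece a d (by linarith) (by linarith) z f (hz.mono s1) (hf.mono_set s1)
        (fun t ht => h t (s1 ht))
      have p2 := ih d b (by linarith) (by linarith) z f (hz.mono s2) (hf.mono_set s2)
        (by
          intro t ht
          rw [h t (s2 ht), h d ⟨had, hdb⟩, add_assoc]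
          congr 1
          refine (intervalIntegral.integral_add_adjacent_intervals
            ((intervalIntegrable_iff_integrableOn_Icc_of_le had).2 (hLzf.mono_set s1)) ?_).symm
          exact (intervalIntegrable_iff_integrableOn_Icc_of_le ht.1).2
            (hLzf.mono_set ((Icc_subset_Icc_right ht.2).trans s2)))
      have iz := hi hz.norm.integrableOn_Icc
      have ik := hi (K.continuous.comp_continuousOn hz).norm.integrableOn_Icc
      have jf := hi hf.norm
      have e1 := intervalIntegral.integral_add_adjacent_intervals iz.1 iz.2
      have e2 := intervalIntegral.integral_add_adjacent_intervals ik.1 ik.2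
      have e3 := intervalIntegral.integral_add_adjacent_intervals jf.1 jf.2
      simp only [Function.comp_apply] at e2
      rw [← e1, ← e2, ← e3]
      linarith
  intro a b hab
  obtain ⟨N, hN⟩ := exists_nat_ge ((b - a) / δ)
  refine main N a b hab ?_
  rw [div_le_iff₀ hδ] at hN
  linarith

end helpers

/-- **Observability estimate on intervals of length at least `δ`.**
If `(A, C)` is completely observable and `δ > 0`, there is `c > 0` (depending only
on `A`, `C`, `δ`) such that for every interval `I = [a, b]` of length `b - a ≥ δ`,
every absolutely continuous `z` and integrable `f` with `ż = A z + f` a.e. on `I`,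
one has `∫_I ‖z‖ ≤ c (∫_I ‖C z‖ + ∫_I ‖f‖)`. -/
theorem observability_estimate_length_ge
    (n m : ℕ) (A : Matrix (Fin n) (Fin n) ℝ) (C : Matrix (Fin m) (Fin n) ℝ)
    (hobs : CompletelyObservable n m A C) (δ : ℝ) (hδ : 0 < δ) :
    ∃ c > 0, ∀ (a b : ℝ), δ ≤ b - a →
      ∀ (z f : ℝ → EuclideanSpace ℝ (Fin n)),
        ContinuousOn z (Set.Icc a b) →
        IntegrableOn f (Set.Icc a b) →
        (∀ t ∈ Set.Icc a b,
          z t = z a + ∫ s in a..t, (Matrix.toEuclideanLin A (z s) + f s)) →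
        (∫ t in Set.Icc a b, ‖z t‖) ≤
          c * ((∫ t in Set.Icc a b, ‖Matrix.toEuclideanLin C (z t)‖) +
               ∫ t in Set.Icc a b, ‖f t‖) := by
  let L : EuclideanSpace ℝ (Fin n) →L[ℝ] EuclideanSpace ℝ (Fin n) :=
    (Matrix.toEuclideanLin A).toContinuousLinearMap
  let K : EuclideanSpace ℝ (Fin n) →L[ℝ] EuclideanSpace ℝ (Fin m) :=
    (Matrix.toEuclideanLin C).toContinuousLinearMap
  have hL : ∀ v, L v = Matrix.toEuclideanLin A v := fun v => rfl
  have hK : ∀ v, K v = Matrix.toEuclideanLin C v := fun v => rfl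
  have hpow : ∀ (k : ℕ) v, ((L ^ k) v).ofLp = (A ^ k).mulVec v.ofLp := by
    intro k
    induction k with
    | zero => intro v; simp
    | succ k ih =>
      intro v
      rw [pow_succ, ContinuousLinearMap.mul_apply, ih, hL, Matrix.ofLp_toEuclideanLin_apply,
        Matrix.mulVec_mulVec, ← pow_succ]
  obtain ⟨c, hc, H⟩ := obs_all L K (fun v hv => by
    have h0 : v.ofLp = 0 := by
      refine hobs v.ofLp fun k _ => ?_
      have h1 := congrArg WithLp.ofLp (hv k)
      rw [hK, Matrix.ofLp_toEuclideanLin_apply, hpow, Matrix.mulVec_mulVec] at h1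
      simpa using h1
    ext i
    simpa using congrFun h0 i) hδ
  refine ⟨c, hc, fun a b hab z f hz hf h => ?_⟩
  have hle : a ≤ b := by linarith
  have := H a b hab z f hz hf h
  simpa only [intervalIntegral.integral_of_le hle, ← integral_Icc_eq_integral_Ioc, hK] using this
end

section
/- Let A be an n×n real matrix and C an m×n real matrix. The continuous linear map Φ from the Sobolev space W^{1,1}([0,1], ℝ^n) to L¹([0,1], ℝ^m) × L¹([0,1], ℝ^n) defined by Φ(z) = (C z, ż − A z) has closed range. -/
open MeasureTheory

namespace ObsMap

noncomputable section

/-- Lebesgue measure on the unit interval. -/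
abbrev mu : Measure ℝ := volume.restrict (Set.Icc (0:ℝ) 1)

variable {E F X : Type*} [NormedAddCommGroup E] [NormedSpace ℝ E]
  [NormedAddCommGroup F] [NormedSpace ℝ F] [NormedAddCommGroup X] [NormedSpace ℝ X]

/-- A linear map into continuous functions with a uniform bound on `[0,1]` induces a
continuous linear map into `L¹`. -/
lemma exists_clm (Q : X →ₗ[ℝ] (ℝ → F)) (hc : ∀ x, Continuous (Q x)) (K : ℝ) (hK : 0 ≤ K)
    (hb : ∀ x, ∀ t ∈ Set.Icc (0:ℝ) 1, ‖Q x t‖ ≤ K * ‖x‖) :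
    ∃ T : X →L[ℝ] Lp F 1 mu, ∀ x, T x =ᵐ[mu] Q x := by
  have hm : ∀ x, MemLp (Q x) 1 mu := fun x =>
    memLp_one_iff_integrable.2 ((hc x).continuousOn.integrableOn_compact isCompact_Icc)
  let T0 : X →ₗ[ℝ] Lp F 1 mu :=
    { toFun := fun x => (hm x).toLp
      map_add' := fun x y => by
        rw [← MemLp.toLp_add]
        exact MemLp.toLp_congr _ _ (by rw [map_add])
      map_smul' := fun r x => by
        rw [RingHom.id_apply, ← MemLp.toLp_const_smul]
        exact MemLp.toLp_congr _ _ (by rw [map_smul]) }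
  refine ⟨T0.mkContinuous (measureUnivNNReal mu ^ (1:ENNReal).toReal⁻¹ * K) fun x => ?_, fun x => ?_⟩
  · rw [mul_assoc]
    refine Lp.norm_le_of_ae_bound (by positivity) ?_
    filter_upwards [(hm x).coeFn_toLp, ae_restrict_mem measurableSet_Icc] with t h1 h2
    change ‖((hm x).toLp (Q x) : ℝ → F) t‖ ≤ _
    rw [h1]
    exact hb x t h2
  · exact (hm x).coeFn_toLp

/-- The primitive. -/
def prim (w : Lp E 1 mu) (t : ℝ) : E := ∫ s in (0:ℝ)..t, w s ∂mu

lemma integrable_coe (w : Lp E 1 mu) : Integrable w mu := L1.integrable_coeFn w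

lemma prim_add (v w : Lp E 1 mu) (t : ℝ) : prim (v + w) t = prim v t + prim w t := by
  unfold prim
  rw [← intervalIntegral.integral_add (integrable_coe v).intervalIntegrable
    (integrable_coe w).intervalIntegrable]
  refine intervalIntegral.integral_congr_ae ?_
  filter_upwards [Lp.coeFn_add v w] with s hs _
  simpa using hs

lemma prim_smul (r : ℝ) (w : Lp E 1 mu) (t : ℝ) : prim (r • w) t = r • prim w t := by
  unfold prim
  rw [← intervalIntegral.integral_smul]
  refine intervalIntegral.integral_congr_ae ?_
  filter_upwards [Lp.coeFn_smul r w] with s hs _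
  simpa using hs

lemma prim_cont (w : Lp E 1 mu) : Continuous (prim w) :=
  intervalIntegral.continuous_primitive (fun _ _ => (integrable_coe w).intervalIntegrable) 0

lemma prim_bound (w : Lp E 1 mu) (t : ℝ) : ‖prim w t‖ ≤ ‖w‖ := by
  rw [L1.norm_eq_integral_norm]
  refine intervalIntegral.norm_integral_le_integral_norm_uIoc.trans ?_
  exact setIntegral_le_integral (integrable_coe w).norm (Filter.Eventually.of_forall fun _ => norm_nonneg _)

lemma prim_eq (w : Lp E 1 mu) (f : ℝ → E) (hf : w =ᵐ[mu] f) {t : ℝ} (ht : t ∈ Set.Icc (0:ℝ) 1) :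
    prim w t = ∫ s in (0:ℝ)..t, f s := by
  have h1 : prim w t = ∫ s in (0:ℝ)..t, f s ∂mu := by
    refine intervalIntegral.integral_congr_ae ?_
    filter_upwards [hf] with s hs _ using hs
  rw [h1, intervalIntegral.integral_of_le ht.1, intervalIntegral.integral_of_le ht.1,
    Measure.restrict_restrict measurableSet_Ioc, Set.inter_eq_left.2]
  exact fun s hs => ⟨hs.1.le, hs.2.trans ht.2⟩

variable [CompleteSpace E]

/-- The flow of the linear system. -/
def U (a : E →L[ℝ] E) (t : ℝ) : E →L[ℝ] E := NormedSpace.exp (t • a)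

lemma U_deriv (a : E →L[ℝ] E) (t : ℝ) : HasDerivAt (U a) (a * U a t) t :=
  hasDerivAt_exp_smul_const' a t

lemma U_deriv_neg (a : E →L[ℝ] E) (t : ℝ) :
    HasDerivAt (fun s => U a (-s)) (-(U a (-t) * a)) t := by
  have h : HasDerivAt (U a) (U a (-t) * a) (-t) := hasDerivAt_exp_smul_const a (-t)
  have h2 := h.scomp t (hasDerivAt_neg t)
  rw [neg_one_smul] at h2
  exact h2

lemma U_cont (a : E →L[ℝ] E) : Continuous (U a) :=
  continuous_iff_continuousAt.2 fun t => (U_deriv a t).continuousAt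

lemma U_mul_neg (a : E →L[ℝ] E) (t : ℝ) : U a t * U a (-t) = 1 := by
  letI : NormedAlgebra ℚ (E →L[ℝ] E) := NormedAlgebra.restrictScalars ℚ ℝ _
  unfold U
  rw [← NormedSpace.exp_add_of_commute]
  · simp
  · exact ((Commute.refl a).smul_left _).smul_right _

lemma U_zero (a : E →L[ℝ] E) : U a 0 = 1 := by simp [U]

/-- The regular part of the solution. -/
def sol (a : E →L[ℝ] E) (p : E × Lp E 1 mu) (t : ℝ) : E :=
  U a t (p.1 + ∫ s in (0:ℝ)..t, U a (-s) (a (prim p.2 s)))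

lemma integrand_cont (a : E →L[ℝ] E) (w : Lp E 1 mu) :
    Continuous fun s => U a (-s) (a (prim w s)) :=
  ((U_cont a).comp continuous_neg).clm_apply (a.continuous.comp (prim_cont w))

lemma sol_deriv (a : E →L[ℝ] E) (p : E × Lp E 1 mu) (t : ℝ) :
    HasDerivAt (sol a p) (a (sol a p t + prim p.2 t)) t := by
  have h1 := ((integrand_cont a p.2).integral_hasStrictDerivAt 0 t).hasDerivAt.const_add p.1
  have h2 := (U_deriv a t).clm_apply h1
  have h3 : U a t (U a (-t) (a (prim p.2 t))) = a (prim p.2 t) := by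
    have := congrArg (fun L => L (a (prim p.2 t))) (U_mul_neg a t)
    simpa using this
  have h4 : a (sol a p t + prim p.2 t) = (a * U a t) (p.1 + ∫ s in (0:ℝ)..t,
      U a (-s) (a (prim p.2 s))) + U a t (U a (-t) (a (prim p.2 t))) := by
    rw [h3, map_add]
    rfl
  rw [h4]
  exact h2

lemma sol_cont (a : E →L[ℝ] E) (p : E × Lp E 1 mu) : Continuous (sol a p) :=
  continuous_iff_continuousAt.2 fun t => (sol_deriv a p t).continuousAt

lemma sol_add (a : E →L[ℝ] E) (p q : E × Lp E 1 mu) (t : ℝ) :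
    sol a (p + q) t = sol a p t + sol a q t := by
  unfold sol
  simp only [Prod.fst_add, Prod.snd_add, prim_add, map_add]
  rw [intervalIntegral.integral_add ((integrand_cont a _).intervalIntegrable _ _)
    ((integrand_cont a _).intervalIntegrable _ _), map_add]
  abel

lemma sol_smul (a : E →L[ℝ] E) (r : ℝ) (p : E × Lp E 1 mu) (t : ℝ) :
    sol a (r • p) t = r • sol a p t := by
  unfold sol
  simp only [Prod.smul_fst, Prod.smul_snd, prim_smul, map_smul]
  rw [intervalIntegral.integral_smul, ← smul_add, map_smul]

lemma sol_bound (a : E →L[ℝ] E) : ∃ K : ℝ, 0 ≤ K ∧ ∀ p : E × Lp E 1 mu,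
    ∀ t ∈ Set.Icc (0:ℝ) 1, ‖sol a p t‖ ≤ K * ‖p‖ := by
  obtain ⟨M, hM⟩ := (isCompact_Icc (a := (-1:ℝ)) (b := 1)).exists_bound_of_continuousOn
    (U_cont a).continuousOn
  have hM0 : 0 ≤ M := (norm_nonneg _).trans (hM 0 (by norm_num))
  refine ⟨M * (1 + M * ‖a‖), by positivity, fun p t ht => ?_⟩
  have hi : ‖∫ s in (0:ℝ)..t, U a (-s) (a (prim p.2 s))‖ ≤ (M * (‖a‖ * ‖p‖)) * |t - 0| := by
    refine intervalIntegral.norm_integral_le_of_norm_le_const fun s hs => ?_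
    rw [Set.uIoc_of_le ht.1] at hs
    refine (ContinuousLinearMap.le_opNorm _ _).trans ?_
    refine mul_le_mul (hM _ ⟨by linarith [hs.2, ht.2], by linarith [hs.1]⟩) ?_ (norm_nonneg _) hM0
    refine (ContinuousLinearMap.le_opNorm _ _).trans ?_
    gcongr
    exact (prim_bound _ _).trans (norm_snd_le p)
  have hi2 : ‖∫ s in (0:ℝ)..t, U a (-s) (a (prim p.2 s))‖ ≤ M * (‖a‖ * ‖p‖) := by
    refine hi.trans (mul_le_of_le_one_right (by positivity) ?_)
    rw [sub_zero, abs_of_nonneg ht.1]; exact ht.2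
  unfold sol
  refine (ContinuousLinearMap.le_opNorm _ _).trans ?_
  calc _ ≤ M * (‖p‖ + M * (‖a‖ * ‖p‖)) := by
        refine mul_le_mul (hM _ ⟨by linarith [ht.1], ht.2⟩) ?_ (norm_nonneg _) hM0
        exact (norm_add_le _ _).trans (add_le_add (norm_fst_le p) hi2)
    _ = _ := by ring

/-- Existence. -/
lemma sol_eq (a : E →L[ℝ] E) (p : E × Lp E 1 mu) {t : ℝ} (ht : t ∈ Set.Icc (0:ℝ) 1) :
    sol a p t + prim p.2 t = p.1 + ∫ s in (0:ℝ)..t, (a (sol a p s + prim p.2 s) + p.2 s) := by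
  have hc : Continuous fun s => a (sol a p s + prim p.2 s) :=
    a.continuous.comp ((sol_cont a p).add (prim_cont p.2))
  have hw : IntervalIntegrable (p.2 : ℝ → E) volume 0 t := by
    rw [intervalIntegrable_iff_integrableOn_Icc_of_le ht.1]
    exact IntegrableOn.mono_set (integrable_coe p.2) (Set.Icc_subset_Icc_right ht.2)
  rw [intervalIntegral.integral_add (hc.intervalIntegrable _ _) hw,
    ← prim_eq p.2 _ (Filter.EventuallyEq.refl _ _) ht,
    intervalIntegral.integral_eq_sub_of_hasDerivAt (fun x _ => sol_deriv a p x)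
      (hc.intervalIntegrable _ _)]
  have : sol a p 0 = p.1 := by simp [sol, U_zero]
  rw [this]
  abel

/-- Uniqueness. -/
lemma sol_unique (a : E →L[ℝ] E) (w : Lp E 1 mu) (z f : ℝ → E)
    (hz : ContinuousOn z (Set.Icc 0 1)) (hf : IntegrableOn f (Set.Icc 0 1))
    (he : ∀ t ∈ Set.Icc (0:ℝ) 1, z t = z 0 + ∫ s in (0:ℝ)..t, (a (z s) + f s))
    (hw : w =ᵐ[mu] f) {t : ℝ} (ht : t ∈ Set.Icc (0:ℝ) 1) :
    z t = sol a (z 0, w) t + prim w t := by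
  let Z : ℝ → E := Set.IccExtend (zero_le_one (α := ℝ)) (Set.restrict (Set.Icc 0 1) z)
  have hZc : Continuous Z := (continuousOn_iff_continuous_restrict.1 hz).Icc_extend'
  have hZ : ∀ s ∈ Set.Icc (0:ℝ) 1, Z s = z s := fun s hs => by
    simp only [Z]
    rw [Set.IccExtend_of_mem _ _ hs]; rfl
  let u : ℝ → E := fun t => z 0 + ∫ s in (0:ℝ)..t, a (Z s)
  have haZ : Continuous fun s => a (Z s) := a.continuous.comp hZc
  have hu : ∀ t, HasDerivAt u (a (Z t)) t := fun t =>
    (haZ.integral_hasStrictDerivAt 0 t).hasDerivAt.const_add (z 0)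
  have hzu : ∀ t ∈ Set.Icc (0:ℝ) 1, z t = u t + prim w t := fun t ht => by
    have hfi : IntervalIntegrable f volume 0 t := by
      rw [intervalIntegrable_iff_integrableOn_Icc_of_le ht.1]
      exact hf.mono_set (Set.Icc_subset_Icc_right ht.2)
    have hcongr : ∫ s in (0:ℝ)..t, (a (z s) + f s) = ∫ s in (0:ℝ)..t, (a (Z s) + f s) := by
      refine intervalIntegral.integral_congr fun s hs => ?_
      rw [Set.uIcc_of_le ht.1] at hs
      rw [hZ s ⟨hs.1, hs.2.trans ht.2⟩]
    rw [he t ht, hcongr, intervalIntegral.integral_add (haZ.intervalIntegrable _ _) hfi,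
      prim_eq w f hw ht, ← add_assoc]
  have hd : ∀ s ∈ Set.uIcc 0 t, HasDerivAt (fun s => U a (-s) (u s)) (U a (-s) (a (prim w s))) s := by
    intro s hs
    rw [Set.uIcc_of_le ht.1] at hs
    have hs' : s ∈ Set.Icc (0:ℝ) 1 := ⟨hs.1, hs.2.trans ht.2⟩
    have h := (U_deriv_neg a s).clm_apply (hu s)
    convert h using 1
    rw [hZ s hs', hzu s hs']
    simp
  have hI := intervalIntegral.integral_eq_sub_of_hasDerivAt hd
    ((integrand_cont a w).intervalIntegrable _ _)
  have hu0 : u 0 = z 0 := by simp [u]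
  rw [hzu t ht]
  congr 1
  unfold sol
  simp only
  rw [hI, hu0, neg_zero, U_zero, ContinuousLinearMap.one_apply, add_sub_cancel]
  have := congrArg (fun L => L (u t)) (U_mul_neg a t)
  simpa using this.symm

lemma main [FiniteDimensional ℝ E] (a : E →L[ℝ] E) (c : E →L[ℝ] F) :
    IsClosed { w : Lp F 1 mu × Lp E 1 mu |
      ∃ z f : ℝ → E,
        ContinuousOn z (Set.Icc 0 1) ∧
        IntegrableOn f (Set.Icc 0 1) ∧
        (∀ t ∈ Set.Icc (0:ℝ) 1, z t = z 0 + ∫ s in (0:ℝ)..t, (a (z s) + f s)) ∧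
        w.1 =ᵐ[mu] (fun t => c (z t)) ∧ w.2 =ᵐ[mu] f } := by
  obtain ⟨K, hK, hb⟩ := sol_bound a
  let Q : (E × Lp E 1 mu) →ₗ[ℝ] (ℝ → F) :=
    { toFun := fun p t => c (sol a p t + prim p.2 t)
      map_add' := fun p q => by
        funext t
        simp only [sol_add, Prod.snd_add, prim_add, Pi.add_apply, map_add]
        abel
      map_smul' := fun r p => by
        funext t
        simp only [sol_smul, Prod.smul_snd, prim_smul, Pi.smul_apply, map_add, map_smul, smul_add,
          RingHom.id_apply] }
  obtain ⟨T, hT⟩ := exists_clm Q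
    (fun p => c.continuous.comp ((sol_cont a p).add (prim_cont p.2))) (‖c‖ * (K + 1)) (by positivity)
    (fun p t ht => by
      refine (c.le_opNorm _).trans ?_
      rw [mul_assoc]
      gcongr
      refine (norm_add_le _ _).trans ?_
      have h1 := hb p t ht
      have h2 := (prim_bound p.2 t).trans (norm_snd_le p)
      linarith)
  let P : E →ₗ[ℝ] Lp F 1 mu := (T.comp (ContinuousLinearMap.inl ℝ E (Lp E 1 mu))).toLinearMap
  have hcl : IsClosed (P.range : Set (Lp F 1 mu)) := Submodule.closed_of_finiteDimensional _
  have hcont : Continuous fun w : Lp F 1 mu × Lp E 1 mu => w.1 - T (0, w.2) := by fun_prop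
  convert hcl.preimage hcont using 1
  ext w
  simp only [Set.mem_setOf_eq, Set.mem_preimage, SetLike.mem_coe, LinearMap.mem_range]
  have key : ∀ x : E, P x = w.1 - T (0, w.2) ↔ w.1 = T (x, w.2) := fun x => by
    have h : T (x, w.2) = P x + T (0, w.2) := by
      change _ = T (x, 0) + _
      rw [← map_add]; simp
    rw [h, eq_sub_iff_add_eq, eq_comm]
  simp only [key]
  constructor
  · rintro ⟨z, f, hz, hf, he, h1, h2⟩
    refine ⟨z 0, Lp.ext (h1.trans ?_)⟩
    filter_upwards [hT (z 0, w.2), ae_restrict_mem measurableSet_Icc] with t ht1 ht2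
    rw [ht1, sol_unique a w.2 z f hz hf he h2 ht2]
    rfl
  · rintro ⟨x, hx⟩
    refine ⟨fun t => sol a (x, w.2) t + prim w.2 t, w.2,
      ((sol_cont a _).add (prim_cont _)).continuousOn, integrable_coe _, fun t ht => ?_, ?_,
      Filter.EventuallyEq.refl _ _⟩
    · have h0 : sol a (x, w.2) 0 + prim w.2 0 = x := by simp [sol, U_zero, prim]
      simp only [h0]
      exact sol_eq a (x, w.2) ht
    · rw [hx]
      exact hT (x, w.2)

end

end ObsMap

/-- **Closed range of the observation map.**
The image of the map `Φ : W^{1,1}([0,1], ℝⁿ) → L¹([0,1], ℝᵐ) × L¹([0,1], ℝⁿ)`,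
`Φ(z) = (C z, ż − A z)`, is closed.  An element `z` of `W^{1,1}` is encoded as a
continuous function satisfying the integral identity `z t = z 0 + ∫₀ᵗ (A z + f)`
with integrable `f = ż − A z`, and the image is described inside the product of
the `L¹` spaces over `[0,1]`. -/
theorem observation_map_closed_range
    (n m : ℕ) (A : Matrix (Fin n) (Fin n) ℝ) (C : Matrix (Fin m) (Fin n) ℝ) :
    IsClosed { w : Lp (EuclideanSpace ℝ (Fin m)) 1 (volume.restrict (Set.Icc (0:ℝ) 1)) ×
                   Lp (EuclideanSpace ℝ (Fin n)) 1 (volume.restrict (Set.Icc (0:ℝ) 1)) |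
      ∃ z f : ℝ → EuclideanSpace ℝ (Fin n),
        ContinuousOn z (Set.Icc 0 1) ∧
        IntegrableOn f (Set.Icc 0 1) ∧
        (∀ t ∈ Set.Icc (0:ℝ) 1,
          z t = z 0 + ∫ s in (0:ℝ)..t, (Matrix.toEuclideanLin A (z s) + f s)) ∧
        (w.1 : ℝ → EuclideanSpace ℝ (Fin m))
            =ᵐ[volume.restrict (Set.Icc (0:ℝ) 1)] (fun t => Matrix.toEuclideanLin C (z t)) ∧
        (w.2 : ℝ → EuclideanSpace ℝ (Fin n)) =ᵐ[volume.restrict (Set.Icc (0:ℝ) 1)] f } := by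
  exact ObsMap.main (LinearMap.toContinuousLinearMap (Matrix.toEuclideanLin A))
    (LinearMap.toContinuousLinearMap (Matrix.toEuclideanLin C))
end

section
/- Let A be an n×n real matrix and C an m×n real matrix such that the pair (A, C) is completely observable. Then there exists a constant c > 0, depending only on A and C, such that for every z ∈ W^{1,1}([0,1], ℝ^n) one has ∫₀¹ |z(t)| dt + ∫₀¹ |ż(t)| dt ≤ c ( ∫₀¹ |C z(t)| dt + ∫₀¹ |ż(t) − A z(t)| dt ). -/
open MeasureTheory

section helpers

variable {E F : Type*} [NormedAddCommGroup E] [NormedSpace ℝ E] [FiniteDimensional ℝ E]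
  [NormedAddCommGroup F] [NormedSpace ℝ F]

lemma hasDerivAt_flow (L : E →L[ℝ] E) (v : E) (t : ℝ) :
    HasDerivAt (fun t : ℝ => NormedSpace.exp (t • L) v) (L (NormedSpace.exp (t • L) v)) t := by
  haveI : CompleteSpace E := FiniteDimensional.complete ℝ E
  have h := hasDerivAt_exp_smul_const' (𝕂 := ℝ) L t
  exact h.clm_apply (hasDerivAt_const t v) |>.congr_deriv (by simp)

lemma continuous_flowOp (L : E →L[ℝ] E) :
    Continuous (fun t : ℝ => NormedSpace.exp (t • L)) := by
  haveI : CompleteSpace E := FiniteDimensional.complete ℝ E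
  exact continuous_iff_continuousAt.2 fun t =>
    (hasDerivAt_exp_smul_const' (𝕂 := ℝ) L t).continuousAt

lemma flow_injective (L : E →L[ℝ] E) (v : E) (t : ℝ)
    (h : NormedSpace.exp (t • L) v = 0) : v = 0 := by
  haveI : CompleteSpace E := FiniteDimensional.complete ℝ E
  letI : NormedAlgebra ℚ (E →L[ℝ] E) := NormedAlgebra.restrictScalars ℚ ℝ _
  obtain ⟨u, hu⟩ := NormedSpace.isUnit_exp (t • L)
  have h1 : (↑u⁻¹ * ↑u : E →L[ℝ] E) v = 0 := by
    rw [ContinuousLinearMap.mul_apply, hu, h, map_zero]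
  simpa using h1

lemma flow_unobs (L : E →L[ℝ] E) (Q : E →L[ℝ] F) (v : E)
    (h : ∀ t ∈ Set.Icc (0:ℝ) 1, Q (NormedSpace.exp (t • L) v) = 0) (k : ℕ) :
    ∀ t ∈ Set.Ioo (0:ℝ) 1, Q ((L ^ k) (NormedSpace.exp (t • L) v)) = 0 := by
  induction k with
  | zero => intro t ht; simpa using h t ⟨ht.1.le, ht.2.le⟩
  | succ k ih =>
    intro t ht
    have hd : HasDerivAt (fun s : ℝ => Q ((L ^ k) (NormedSpace.exp (s • L) v)))
        (Q ((L ^ k) (L (NormedSpace.exp (t • L) v)))) t :=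
      (Q.comp (L ^ k)).hasFDerivAt.comp_hasDerivAt t (hasDerivAt_flow L v t)
    have h0 : (fun s : ℝ => Q ((L ^ k) (NormedSpace.exp (s • L) v))) =ᶠ[nhds t] fun _ => 0 := by
      filter_upwards [isOpen_Ioo.mem_nhds ht] with s hs using ih s hs
    have := hd.unique ((hasDerivAt_const t (0:F)).congr_of_eventuallyEq h0)
    rw [pow_succ]
    exact this

lemma flow_lower (L : E →L[ℝ] E) (Q : E →L[ℝ] F)
    (hobs : ∀ v, (∀ k, Q ((L ^ k) v) = 0) → v = 0) :
    ∃ K : ℝ, 0 ≤ K ∧ ∀ v, ‖v‖ ≤ K * ∫ t in (0:ℝ)..1, ‖Q (NormedSpace.exp (t • L) v)‖ := by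
  rcases subsingleton_or_nontrivial E with hE | hE
  · exact ⟨0, le_rfl, fun v => by simp [Subsingleton.elim v 0]⟩
  haveI : ProperSpace E := FiniteDimensional.proper_real E
  have hc : Continuous fun v : E => ∫ t in (0:ℝ)..1, ‖Q (NormedSpace.exp (t • L) v)‖ := by
    apply intervalIntegral.continuous_parametric_intervalIntegral_of_continuous (s := fun _ => 1)
    · have := continuous_flowOp L
      simp only [Function.uncurry_def]
      exact (Q.continuous.comp ((this.comp continuous_snd).clm_apply continuous_fst)).norm
    · exact continuous_const
  obtain ⟨u, hu, hmin⟩ := (isCompact_sphere (0:E) 1).exists_isMinOn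
    (NormedSpace.sphere_nonempty.2 zero_le_one) hc.continuousOn
  have hu1 : ‖u‖ = 1 := by simpa using hu
  set N : E → ℝ := fun v => ∫ t in (0:ℝ)..1, ‖Q (NormedSpace.exp (t • L) v)‖ with hN
  have hpos : 0 < N u := by
    apply intervalIntegral.integral_pos one_pos
    · exact (Q.continuous.comp
        ((continuous_flowOp L).clm_apply continuous_const)).norm.continuousOn
    · intros; positivity
    · by_contra hcon
      push Not at hcon
      have h0 : ∀ t ∈ Set.Icc (0:ℝ) 1, Q (NormedSpace.exp (t • L) u) = 0 :=
        fun t ht => norm_le_zero_iff.1 (hcon t ht)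
      have h1 := hobs _ fun k => flow_unobs L Q u h0 k (1/2) (by norm_num)
      have h2 := flow_injective L u _ h1
      simp [h2] at hu1
  refine ⟨(N u)⁻¹, by positivity, fun v => ?_⟩
  rcases eq_or_ne v 0 with rfl | hv
  · simp
  have hv' : 0 < ‖v‖ := norm_pos_iff.2 hv
  have h1 : N u ≤ N (‖v‖⁻¹ • v) := hmin (by simp [norm_smul, hv'.ne'])
  have h2 : N (‖v‖⁻¹ • v) = ‖v‖⁻¹ * N v := by
    simp only [hN, map_smul, norm_smul, intervalIntegral.integral_const_mul, norm_inv, norm_norm]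
  rw [h2, inv_mul_eq_div, le_div_iff₀ hv'] at h1
  change ‖v‖ ≤ (N u)⁻¹ * N v
  rw [inv_mul_eq_div, le_div_iff₀ hpos]
  linarith

lemma gronwall_int (w : ℝ → E) (hw : Continuous w) (K ε : ℝ) (hK : 0 < K)
    (h : ∀ t ∈ Set.Icc (0:ℝ) 1, ‖w t‖ ≤ ε + K * ∫ s in (0:ℝ)..t, ‖w s‖) :
    ∫ s in (0:ℝ)..1, ‖w s‖ ≤ ε * ((Real.exp K - 1) / K) := by
  have hd : ∀ t, HasDerivAt (fun t => ∫ s in (0:ℝ)..t, ‖w s‖) ‖w t‖ t :=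
    fun t => (hw.norm.integral_hasStrictDerivAt 0 t).hasDerivAt
  have := norm_le_gronwallBound_of_norm_deriv_right_le (f := fun t => ∫ s in (0:ℝ)..t, ‖w s‖)
    (f' := fun t => ‖w t‖) (δ := 0) (K := K) (ε := ε) (a := 0) (b := 1)
    (fun t _ => (hd t).continuousAt.continuousWithinAt)
    (fun t _ => (hd t).hasDerivWithinAt) (by simp)
    (fun t ht => by
      have h1 := h t ⟨ht.1, ht.2.le⟩
      have h2 := mul_le_mul_of_nonneg_left (Real.le_norm_self (∫ s in (0:ℝ)..t, ‖w s‖)) hK.le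
      rw [norm_norm]; linarith) 1 (by simp)
  rw [gronwallBound_of_K_ne_0 hK.ne'] at this
  refine (Real.le_norm_self _).trans (this.trans (le_of_eq ?_))
  simp; ring

lemma abstract_estimate (L : E →L[ℝ] E) (Q : E →L[ℝ] F)
    (hobs : ∀ v, (∀ k, Q ((L ^ k) v) = 0) → v = 0) :
    ∃ c > 0, ∀ z z' : ℝ → E, Continuous z → IntervalIntegrable z' volume 0 1 →
      (∀ t ∈ Set.Icc (0:ℝ) 1, z t = z 0 + ∫ s in (0:ℝ)..t, z' s) →
      (∫ t in (0:ℝ)..1, ‖z t‖) + (∫ t in (0:ℝ)..1, ‖z' t‖) ≤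
        c * ((∫ t in (0:ℝ)..1, ‖Q (z t)‖) + ∫ t in (0:ℝ)..1, ‖z' t - L (z t)‖) := by
  haveI : CompleteSpace E := FiniteDimensional.complete ℝ E
  obtain ⟨k, hk, hlow⟩ := flow_lower L Q hobs
  obtain ⟨M, hM⟩ := isCompact_Icc.exists_bound_of_continuousOn
    (s := Set.Icc (0:ℝ) 1) (continuous_flowOp L).continuousOn
  have hM0 : 0 ≤ M := (norm_nonneg _).trans (hM 0 (by simp))
  set K : ℝ := ‖L‖ + 1 with hKdef
  have hK : 0 < K := by positivity
  have hLK : ∀ v, ‖L v‖ ≤ K * ‖v‖ := fun v =>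
    (L.le_opNorm v).trans (mul_le_mul_of_nonneg_right (by linarith) (norm_nonneg _))
  set G : ℝ := (Real.exp K - 1) / K with hG
  have hG0 : 0 ≤ G := div_nonneg (by linarith [Real.add_one_le_exp K]) hK.le
  refine ⟨1 + (1 + K) * (M * k + M * k * ‖Q‖ * G + G), by positivity, ?_⟩
  intro z z' hz hz' hzz
  set x : ℝ → E := fun t => NormedSpace.exp (t • L) (z 0) with hx
  have hxc : Continuous x := (continuous_flowOp L).clm_apply continuous_const
  have hxM : ∀ t ∈ Set.Icc (0:ℝ) 1, ‖x t‖ ≤ M * ‖z 0‖ := fun t ht =>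
    ((NormedSpace.exp (t • L)).le_opNorm _).trans
      (mul_le_mul_of_nonneg_right (hM t ht) (norm_nonneg _))
  have hx0 : x 0 = z 0 := by simp [hx, NormedSpace.exp_zero]
  set w : ℝ → E := fun t => z t - x t with hw
  have hwc : Continuous w := hz.sub hxc
  have hf : IntervalIntegrable (fun t => z' t - L (z t)) volume 0 1 :=
    hz'.sub ((L.continuous.comp hz).intervalIntegrable _ _)
  have hε0 : 0 ≤ ∫ t in (0:ℝ)..1, ‖z' t - L (z t)‖ :=
    intervalIntegral.integral_nonneg zero_le_one fun _ _ => norm_nonneg _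
  have hp0 : 0 ≤ ∫ t in (0:ℝ)..1, ‖Q (z t)‖ :=
    intervalIntegral.integral_nonneg zero_le_one fun _ _ => norm_nonneg _
  have hgr : ∀ t ∈ Set.Icc (0:ℝ) 1,
      ‖w t‖ ≤ (∫ t in (0:ℝ)..1, ‖z' t - L (z t)‖) + K * ∫ s in (0:ℝ)..t, ‖w s‖ := by
    intro t ht
    have hsub : Set.uIcc 0 t ⊆ Set.uIcc (0:ℝ) 1 := by
      rw [Set.uIcc_of_le ht.1, Set.uIcc_of_le zero_le_one]
      exact Set.Icc_subset_Icc le_rfl ht.2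
    have hft := hf.mono_set hsub
    have hLx : IntervalIntegrable (fun s => L (x s)) volume 0 t :=
      (L.continuous.comp hxc).intervalIntegrable _ _
    have h1 : ∫ s in (0:ℝ)..t, L (x s) = x t - x 0 :=
      intervalIntegral.integral_eq_sub_of_hasDerivAt
        (fun s _ => hasDerivAt_flow L (z 0) s) hLx
    have hweq : w t = ∫ s in (0:ℝ)..t, ((z' s - L (z s)) + L (w s)) := by
      have : ∀ s, (z' s - L (z s)) + L (w s) = z' s - L (x s) := fun s => by
        simp [hw]
      simp only [this]
      rw [intervalIntegral.integral_sub (hz'.mono_set hsub) hLx, h1, hx0]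
      simp only [hw]
      rw [hzz t ht]; abel
    have hKw : IntervalIntegrable (fun s => K * ‖w s‖) volume 0 t :=
      (continuous_const.mul hwc.norm).intervalIntegrable _ _
    calc ‖w t‖ ≤ ∫ s in (0:ℝ)..t, (‖z' s - L (z s)‖ + K * ‖w s‖) := by
          rw [hweq]
          refine intervalIntegral.norm_integral_le_of_norm_le ht.1 ?_ (hft.norm.add hKw)
          exact Filter.Eventually.of_forall fun s _ =>
            (norm_add_le _ _).trans (add_le_add le_rfl (hLK _))
      _ = (∫ s in (0:ℝ)..t, ‖z' s - L (z s)‖) + K * ∫ s in (0:ℝ)..t, ‖w s‖ := by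
          rw [intervalIntegral.integral_add hft.norm hKw, intervalIntegral.integral_const_mul]
      _ ≤ _ := by
          gcongr
          exact intervalIntegral.integral_mono_interval le_rfl ht.1 ht.2
            (Filter.Eventually.of_forall fun _ => norm_nonneg _) hf.norm
  have hW := gronwall_int w hwc K _ hK hgr
  rw [← hG] at hW
  have hz0 : ‖z 0‖ ≤ k * ((∫ t in (0:ℝ)..1, ‖Q (z t)‖) + ‖Q‖ * ∫ t in (0:ℝ)..1, ‖w t‖) := by
    refine (hlow (z 0)).trans (mul_le_mul_of_nonneg_left ?_ hk)
    have i1 : IntervalIntegrable (fun t => ‖Q (z t)‖) volume 0 1 :=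
      (Q.continuous.comp hz).norm.intervalIntegrable _ _
    have i2 : IntervalIntegrable (fun t => ‖Q‖ * ‖w t‖) volume 0 1 :=
      (continuous_const.mul hwc.norm).intervalIntegrable _ _
    rw [← intervalIntegral.integral_const_mul, ← intervalIntegral.integral_add i1 i2]
    refine intervalIntegral.integral_mono_on zero_le_one
      ((Q.continuous.comp hxc).norm.intervalIntegrable _ _) (i1.add i2) fun t _ => ?_
    have : Q (x t) = Q (z t) - Q (w t) := by simp [hw]
    change ‖Q (x t)‖ ≤ _
    rw [this]
    exact (norm_sub_le _ _).trans (add_le_add le_rfl (Q.le_opNorm _))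
  have hzI : ∫ t in (0:ℝ)..1, ‖z t‖ ≤ M * ‖z 0‖ + ∫ t in (0:ℝ)..1, ‖w t‖ := by
    have i2 : IntervalIntegrable (fun t => ‖w t‖) volume 0 1 := hwc.norm.intervalIntegrable _ _
    have i1 : IntervalIntegrable (fun _ : ℝ => M * ‖z 0‖) volume 0 1 :=
      continuous_const.intervalIntegrable _ _
    calc ∫ t in (0:ℝ)..1, ‖z t‖ ≤ ∫ t in (0:ℝ)..1, (M * ‖z 0‖ + ‖w t‖) := by
          refine intervalIntegral.integral_mono_on zero_le_one
            (hz.norm.intervalIntegrable _ _) (i1.add i2) fun t ht => ?_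
          have : z t = x t + w t := by simp [hw]
          rw [this]
          exact (norm_add_le _ _).trans (add_le_add (hxM t ht) le_rfl)
      _ = _ := by rw [intervalIntegral.integral_add i1 i2]; simp
  have hzI' : ∫ t in (0:ℝ)..1, ‖z' t‖ ≤
      (∫ t in (0:ℝ)..1, ‖z' t - L (z t)‖) + K * ∫ t in (0:ℝ)..1, ‖z t‖ := by
    have i2 : IntervalIntegrable (fun t => K * ‖z t‖) volume 0 1 :=
      (continuous_const.mul hz.norm).intervalIntegrable _ _
    rw [← intervalIntegral.integral_const_mul, ← intervalIntegral.integral_add hf.norm i2]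
    refine intervalIntegral.integral_mono_on zero_le_one hz'.norm (hf.norm.add i2) fun t _ => ?_
    calc ‖z' t‖ = ‖(z' t - L (z t)) + L (z t)‖ := by simp
      _ ≤ _ := (norm_add_le _ _).trans (add_le_add le_rfl (hLK _))
  generalize (∫ t in (0:ℝ)..1, ‖z' t - L (z t)‖) = ε at *
  generalize (∫ t in (0:ℝ)..1, ‖Q (z t)‖) = p at *
  generalize (∫ t in (0:ℝ)..1, ‖w t‖) = W at *
  generalize (∫ t in (0:ℝ)..1, ‖z t‖) = Z at *
  have hQ := norm_nonneg Q
  have a1 : ‖z 0‖ ≤ k * (p + ‖Q‖ * (ε * G)) := hz0.trans (by gcongr)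
  have a2 : Z ≤ M * (k * (p + ‖Q‖ * (ε * G))) + ε * G := hzI.trans (by gcongr)
  have a3 : Z ≤ (M * k + M * k * ‖Q‖ * G + G) * (p + ε) := by
    have : 0 ≤ M * k * ε + (M * k * ‖Q‖ * G + G) * p := by positivity
    linarith
  have a4 := mul_le_mul_of_nonneg_left a3 (by positivity : 0 ≤ 1 + K)
  linarith

end helpers

/-- **A priori estimate in `W^{1,1}([0,1])`.**
If `(A, C)` is completely observable, there is `c > 0` such that for every
`z ∈ W^{1,1}([0,1], ℝⁿ)` — encoded as a continuous function with integrable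
derivative `z'` satisfying `z t = z 0 + ∫₀ᵗ z'` — one has
`∫₀¹ ‖z‖ + ∫₀¹ ‖ż‖ ≤ c (∫₀¹ ‖C z‖ + ∫₀¹ ‖ż − A z‖)`. -/
theorem observability_W11_estimate
    (n m : ℕ) (A : Matrix (Fin n) (Fin n) ℝ) (C : Matrix (Fin m) (Fin n) ℝ)
    (hobs : CompletelyObservable n m A C) :
    ∃ c > 0, ∀ z z' : ℝ → EuclideanSpace ℝ (Fin n),
      ContinuousOn z (Set.Icc 0 1) →
      IntegrableOn z' (Set.Icc 0 1) →
      (∀ t ∈ Set.Icc (0:ℝ) 1, z t = z 0 + ∫ s in (0:ℝ)..t, z' s) →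
      (∫ t in Set.Icc (0:ℝ) 1, ‖z t‖) + (∫ t in Set.Icc (0:ℝ) 1, ‖z' t‖) ≤
        c * ((∫ t in Set.Icc (0:ℝ) 1, ‖Matrix.toEuclideanLin C (z t)‖) +
             ∫ t in Set.Icc (0:ℝ) 1, ‖z' t - Matrix.toEuclideanLin A (z t)‖) := by
  have hpow : ∀ (k : ℕ) (v : EuclideanSpace ℝ (Fin n)),
      (((Matrix.toEuclideanLin A).toContinuousLinearMap ^ k) v).ofLp = (A ^ k).mulVec v.ofLp := by
    intro k
    induction k with
    | zero => intro v; simp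
    | succ k ih =>
      intro v
      rw [pow_succ, ContinuousLinearMap.mul_apply, ih, pow_succ, ← Matrix.mulVec_mulVec]
      simp [Matrix.toLpLin_apply]
  obtain ⟨c, hc, H⟩ := abstract_estimate (Matrix.toEuclideanLin A).toContinuousLinearMap
    (Matrix.toEuclideanLin C).toContinuousLinearMap (by
      intro v hv
      have := hobs v.ofLp fun k _ => by
        have h := congrArg WithLp.ofLp (hv k)
        rw [← Matrix.mulVec_mulVec, ← hpow]
        simpa [Matrix.toLpLin_apply] using h
      ext i
      simpa using congrFun this i)
  refine ⟨c, hc, fun z z' hz hz' hzz => ?_⟩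
  have e0 : ∀ t ∈ Set.Icc (0:ℝ) 1, Set.IccExtend zero_le_one ((Set.Icc (0:ℝ) 1).domRestrict z) t = z t :=
    fun t ht => by rw [Set.IccExtend_of_mem _ _ ht]; rfl
  have key := H (Set.IccExtend zero_le_one ((Set.Icc (0:ℝ) 1).domRestrict z)) z'
    (continuousOn_iff_continuous_domRestrict.1 hz).Icc_extend'
    ((intervalIntegrable_iff_integrableOn_Icc_of_le zero_le_one).2 hz')
    (fun t ht => by rw [e0 t ht, e0 0 (by simp)]; exact hzz t ht)
  simp only [intervalIntegral.integral_of_le zero_le_one, ← integral_Icc_eq_integral_Ioc] at key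
  rw [setIntegral_congr_fun (g := fun t => ‖z t‖) measurableSet_Icc
      (fun t ht => by simp only [e0 t ht]),
    setIntegral_congr_fun (f := fun t => ‖(Matrix.toEuclideanLin C).toContinuousLinearMap _‖)
      (g := fun t => ‖Matrix.toEuclideanLin C (z t)‖) measurableSet_Icc
      (fun t ht => by simp only [e0 t ht]; rfl),
    setIntegral_congr_fun (f := fun t => ‖z' t - _‖)
      (g := fun t => ‖z' t - Matrix.toEuclideanLin A (z t)‖) measurableSet_Icc
      (fun t ht => by simp only [e0 t ht]; rfl)] at key
  exact key
end

section
/- Consider the canonical observable system of dimension n. There exists a constant c > 0, depending only on n, such that: if z = (z₁, …, z_n) is absolutely continuous on [0,1], f = (f₁, …, f_n) with each f_k ∈ W^{n,1}([0,1]), ż_i = z_{i+1} + f_i for 1 ≤ i ≤ n−1 and ż_n = f_n almost everywhere, and y = z₁, then ∫₀¹ |z(t)| dt ≤ c ( ∫₀¹ |y(t)| dt + |f|_n ), where |f|_n = Σ_{j=0}^n ∫₀¹ |f^{(j)}(t)| dt is the W^{n,1}-norm of f. -/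
open MeasureTheory

/-- Taylor polynomial with derivative data `b`. -/
noncomputable def taylorP (m : ℕ) (b : ℕ → ℝ) (t : ℝ) : ℝ :=
  ∑ j ∈ Finset.range m, b j * (t ^ j / (Nat.factorial j : ℝ))

lemma taylorP_cont (m : ℕ) (b : ℕ → ℝ) : Continuous (taylorP m b) := by
  unfold taylorP
  fun_prop

lemma taylorP_succ (m : ℕ) (b : ℕ → ℝ) (t : ℝ) :
    taylorP (m + 1) b t = b 0 + ∫ s in (0:ℝ)..t, taylorP m (fun j => b (j + 1)) s := by
  unfold taylorP
  rw [intervalIntegral.integral_finsetSum, Finset.sum_range_succ']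
  · simp only [intervalIntegral.integral_const_mul, intervalIntegral.integral_div, integral_pow]
    rw [add_comm]
    congr 1
    · simp
    · refine Finset.sum_congr rfl fun j _ => ?_
      rw [Nat.factorial_succ]
      push_cast
      have : (Nat.factorial j : ℝ) ≠ 0 := by positivity
      have h2 : (j : ℝ) + 1 ≠ 0 := by positivity
      field_simp
      simp
  · intro i _
    apply Continuous.intervalIntegrable
    fun_prop

lemma chain_bound (M : ℝ) (m : ℕ) : ∀ (Z f : ℕ → ℝ → ℝ),
    (∀ k, ContinuousOn (Z k) (Set.Icc 0 1)) →
    (∀ k, IntegrableOn (f k) (Set.Icc 0 1)) →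
    (∀ k, ∫ t in Set.Icc (0:ℝ) 1, |f k t| ≤ M) →
    (∀ k < m, ∀ t ∈ Set.Icc (0:ℝ) 1, Z k t = Z k 0 + ∫ s in (0:ℝ)..t, (Z (k + 1) s + f k s)) →
    (∀ t ∈ Set.Icc (0:ℝ) 1, Z m t = 0) →
    ∀ t ∈ Set.Icc (0:ℝ) 1, |Z 0 t - taylorP m (fun k => Z k 0) t| ≤ m * M := by
  induction m with
  | zero =>
    intro Z f _ _ _ _ h0 t ht
    simp [taylorP, h0 t ht]
  | succ m ih =>
    intro Z f hZ hf hM he h0 t ht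
    have ih' := ih (fun k => Z (k + 1)) (fun k => f (k + 1)) (fun k => hZ _) (fun k => hf _)
      (fun k => hM _) (fun k hk => he (k + 1) (by omega)) h0
    have hsub : Set.uIcc 0 t ⊆ Set.Icc (0:ℝ) 1 := by
      rw [Set.uIcc_of_le ht.1]
      exact Set.Icc_subset_Icc le_rfl ht.2
    have i1 : IntervalIntegrable (Z 1) volume 0 t := ((hZ 1).mono hsub).intervalIntegrable
    have i2 : IntervalIntegrable (f 0) volume 0 t := ((hf 0).mono_set hsub).intervalIntegrable
    have i3 : IntervalIntegrable (taylorP m (fun k => Z (k + 1) 0)) volume 0 t :=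
      (taylorP_cont _ _).intervalIntegrable _ _
    rw [taylorP_succ, he 0 (by omega) t ht]
    simp only [zero_add]
    have e1 : Z 0 0 + (∫ s in (0:ℝ)..t, (Z 1 s + f 0 s)) -
        (Z 0 0 + ∫ s in (0:ℝ)..t, taylorP m (fun k => Z (k + 1) 0) s) =
        (∫ s in (0:ℝ)..t, (Z 1 s - taylorP m (fun k => Z (k + 1) 0) s)) +
          ∫ s in (0:ℝ)..t, f 0 s := by
      rw [intervalIntegral.integral_add i1 i2, intervalIntegral.integral_sub i1 i3]
      ring
    rw [e1]
    have hM0 : 0 ≤ M := le_trans (integral_nonneg fun _ => abs_nonneg _) (hM 0)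
    have b1 : |∫ s in (0:ℝ)..t, (Z 1 s - taylorP m (fun k => Z (k + 1) 0) s)| ≤ m * M := by
      have := intervalIntegral.norm_integral_le_of_norm_le_const (a := 0) (b := t) (C := m * M)
        (f := fun s => Z 1 s - taylorP m (fun k => Z (k + 1) 0) s) (by
          intro s hs
          rw [Set.uIoc_of_le ht.1] at hs
          exact ih' s ⟨hs.1.le, hs.2.trans ht.2⟩)
      rw [Real.norm_eq_abs, sub_zero, abs_of_nonneg ht.1] at this
      exact this.trans (mul_le_of_le_one_right (by positivity) ht.2)
    have b2 : |∫ s in (0:ℝ)..t, f 0 s| ≤ M := by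
      refine le_trans (intervalIntegral.abs_integral_le_integral_abs ht.1) ?_
      rw [intervalIntegral.integral_of_le ht.1]
      refine le_trans (setIntegral_mono_set (hf 0).abs ?_ ?_) (hM 0)
      · exact Filter.Eventually.of_forall fun _ => abs_nonneg _
      · exact (Set.Ioc_subset_Icc_self.trans
          (Set.Icc_subset_Icc le_rfl ht.2)).eventuallyLE
    calc _ ≤ _ := abs_add_le _ _
      _ ≤ m * M + M := add_le_add b1 b2
      _ = _ := by push_cast; ring

/-- extend by zero -/
def extZ {n : ℕ} (a : Fin n → ℝ) (k : ℕ) : ℝ := if h : k < n then a ⟨k, h⟩ else 0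

lemma taylorP_zero {n : ℕ} (a : Fin n → ℝ)
    (h : ∫ t in (0:ℝ)..1, |taylorP n (extZ a) t| = 0) : a = 0 := by
  have hz : ∀ t ∈ Set.Ioo (0:ℝ) 1, taylorP n (extZ a) t = 0 := by
    intro t ht
    by_contra hne
    have : 0 < ∫ t in (0:ℝ)..1, |taylorP n (extZ a) t| :=
      intervalIntegral.integral_pos zero_lt_one (taylorP_cont _ _).abs.continuousOn
        (fun _ _ => abs_nonneg _) ⟨t, ⟨ht.1.le, ht.2.le⟩, abs_pos.2 hne⟩
    linarith
  let p : Polynomial ℝ := ∑ j ∈ Finset.range n,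
    Polynomial.C (extZ a j / (Nat.factorial j : ℝ)) * Polynomial.X ^ j
  have hp : ∀ t, p.eval t = taylorP n (extZ a) t := by
    intro t
    simp only [p, taylorP, Polynomial.eval_finset_sum, Polynomial.eval_mul, Polynomial.eval_C,
      Polynomial.eval_pow, Polynomial.eval_X]
    exact Finset.sum_congr rfl fun j _ => by ring
  have hp0 : p = 0 := by
    refine Polynomial.eq_zero_of_infinite_isRoot p ?_
    refine (Set.Ioo_infinite (zero_lt_one (α := ℝ))).mono fun t ht => ?_
    simp [Polynomial.IsRoot, hp, hz t ht]
  funext i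
  have hc : p.coeff i = 0 := by rw [hp0]; simp
  simp only [p, Polynomial.finset_sum_coeff, Polynomial.coeff_C_mul_X_pow] at hc
  rw [Finset.sum_ite_eq] at hc
  have hf : ((Nat.factorial i : ℕ) : ℝ) ≠ 0 := by positivity
  simpa [extZ, hf] using hc

lemma taylorP_smul {n : ℕ} (r : ℝ) (a : Fin n → ℝ) (t : ℝ) :
    taylorP n (extZ (r • a)) t = r * taylorP n (extZ a) t := by
  simp only [taylorP, Finset.mul_sum]
  refine Finset.sum_congr rfl fun j _ => ?_
  unfold extZ
  split_ifs <;> simp [mul_assoc]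

lemma norm_equiv (n : ℕ) (hn : 0 < n) : ∃ C > 0, ∀ a : Fin n → ℝ,
    ‖a‖ ≤ C * ∫ t in (0:ℝ)..1, |taylorP n (extZ a) t| := by
  haveI : Nonempty (Fin n) := ⟨⟨0, hn⟩⟩
  have hcont : Continuous fun a : Fin n → ℝ => ∫ t in (0:ℝ)..1, |taylorP n (extZ a) t| := by
    apply intervalIntegral.continuous_parametric_intervalIntegral_of_continuous'
    apply Continuous.abs
    unfold taylorP
    refine continuous_finset_sum _ fun j hj => ?_
    have hj' := Finset.mem_range.1 hj
    simp only [extZ, hj', dite_true]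
    fun_prop
  obtain ⟨a₀, ha₀, hmin⟩ := (isCompact_sphere (0 : Fin n → ℝ) 1).exists_isMinOn
    (NormedSpace.sphere_nonempty.2 zero_le_one) hcont.continuousOn
  set δ := ∫ t in (0:ℝ)..1, |taylorP n (extZ a₀) t| with hδ
  have hδ0 : 0 < δ := by
    refine lt_of_le_of_ne (intervalIntegral.integral_nonneg zero_le_one fun _ _ => abs_nonneg _) ?_
    intro h
    have := taylorP_zero a₀ h.symm
    simp [this] at ha₀
  refine ⟨δ⁻¹, inv_pos.2 hδ0, fun a => ?_⟩
  by_cases ha : a = 0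
  · subst ha
    rw [norm_zero]
    exact mul_nonneg (inv_pos.2 hδ0).le
      (intervalIntegral.integral_nonneg zero_le_one fun _ _ => abs_nonneg _)
  have hna : 0 < ‖a‖ := norm_pos_iff.2 ha
  have hmem : ‖a‖⁻¹ • a ∈ Metric.sphere (0 : Fin n → ℝ) 1 := by
    simp [norm_smul, hna.ne']
  have h1 : δ ≤ ∫ t in (0:ℝ)..1, |taylorP n (extZ (‖a‖⁻¹ • a)) t| := hmin hmem
  simp only [taylorP_smul, abs_mul, intervalIntegral.integral_const_mul, abs_inv, abs_norm] at h1
  rw [inv_mul_eq_div, le_div_iff₀ hna] at h1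
  rw [inv_mul_eq_div, le_div_iff₀ hδ0]
  linarith

lemma taylorP_le (m : ℕ) (b : ℕ → ℝ) (B : ℝ) (hb : ∀ j, |b j| ≤ B) (t : ℝ)
    (ht : t ∈ Set.Icc (0:ℝ) 1) : |taylorP m b t| ≤ m * B := by
  unfold taylorP
  refine (Finset.abs_sum_le_sum_abs _ _).trans ?_
  have : ∀ j ∈ Finset.range m, |b j * (t ^ j / (Nat.factorial j : ℝ))| ≤ B := by
    intro j _
    rw [abs_mul]
    refine le_trans (mul_le_of_le_one_right (abs_nonneg _) ?_) (hb j)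
    have h1 : t ^ j ≤ 1 := pow_le_one₀ ht.1 ht.2
    have h2 : (1:ℝ) ≤ Nat.factorial j := by exact_mod_cast Nat.one_le_iff_ne_zero.2 (Nat.factorial_ne_zero j)
    rw [abs_of_nonneg (div_nonneg (pow_nonneg ht.1 _) (by positivity)), div_le_one (by linarith)]
    linarith
  refine (Finset.sum_le_sum this).trans ?_
  simp

/-- **L¹ estimate for the canonical observable system with `W^{n,1}` perturbation.**
For the canonical (Brunovsky) observable system `ż_i = z_{i+1} + f_i` (`i+1 < n`),
`ż_{n-1} = f_{n-1}` (0-indexed), with observation `y = z₀`, there is `c > 0`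
depending only on `n` such that whenever `z` is absolutely continuous on `[0,1]`
and `f ∈ W^{n,1}([0,1], ℝⁿ)` — encoded by the chain `F` of its derivatives with
`F 0 = f` — one has `∫₀¹ ‖z‖ ≤ c (∫₀¹ |y| + |f|ₙ)`, where
`|f|ₙ = Σ_{j=0}^{n} ∫₀¹ ‖f^{(j)}‖`. -/
theorem canonical_system_estimate_smooth_perturbation (n : ℕ) (hn : 0 < n) :
    ∃ c > 0, ∀ (z : ℝ → EuclideanSpace ℝ (Fin n)) (F : ℕ → ℝ → EuclideanSpace ℝ (Fin n)),
      ContinuousOn z (Set.Icc 0 1) →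
      (∀ j < n, ContinuousOn (F j) (Set.Icc 0 1)) →
      (∀ j ≤ n, IntegrableOn (F j) (Set.Icc 0 1)) →
      (∀ j < n, ∀ t ∈ Set.Icc (0:ℝ) 1, F j t = F j 0 + ∫ s in (0:ℝ)..t, F (j + 1) s) →
      (∀ (i : Fin n) (h : (i : ℕ) + 1 < n), ∀ t ∈ Set.Icc (0:ℝ) 1,
        z t i = z 0 i + ∫ s in (0:ℝ)..t, (z s ⟨(i : ℕ) + 1, h⟩ + F 0 s i)) →
      (∀ i : Fin n, (i : ℕ) + 1 = n → ∀ t ∈ Set.Icc (0:ℝ) 1,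
        z t i = z 0 i + ∫ s in (0:ℝ)..t, F 0 s i) →
      (∫ t in Set.Icc (0:ℝ) 1, ‖z t‖) ≤
        c * ((∫ t in Set.Icc (0:ℝ) 1, |z t ⟨0, hn⟩|) +
             ∑ j ∈ Finset.range (n + 1), ∫ t in Set.Icc (0:ℝ) 1, ‖F j t‖) := by
  obtain ⟨C, hC, hequiv⟩ := norm_equiv n hn
  have hn' : (0:ℝ) < n := by exact_mod_cast hn
  refine ⟨n * (n * (C * (1 + n)) + n), by positivity, ?_⟩
  intro z F hz _ hFi _ hz1 hz2
  set Y := ∫ t in Set.Icc (0:ℝ) 1, |z t ⟨0, hn⟩| with hY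
  set M := ∫ t in Set.Icc (0:ℝ) 1, ‖F 0 t‖ with hMdef
  have hM0 : 0 ≤ M := integral_nonneg fun _ => norm_nonneg _
  have hY0 : 0 ≤ Y := integral_nonneg fun _ => abs_nonneg _
  have hMS : M ≤ ∑ j ∈ Finset.range (n + 1), ∫ t in Set.Icc (0:ℝ) 1, ‖F j t‖ :=
    Finset.single_le_sum (f := fun j => ∫ t in Set.Icc (0:ℝ) 1, ‖F j t‖)
      (fun j _ => integral_nonneg fun _ => norm_nonneg _) (by simp)
  let Z : ℕ → ℝ → ℝ := fun k t => extZ (z t) k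
  let f : ℕ → ℝ → ℝ := fun k t => extZ (F 0 t) k
  have hZc : ∀ k, ContinuousOn (Z k) (Set.Icc 0 1) := by
    intro k
    by_cases h : k < n
    · simp only [Z, extZ, h, dite_true]
      fun_prop
    · simp only [Z, extZ, h, dite_false]
      fun_prop
  have hfi : ∀ k, IntegrableOn (f k) (Set.Icc 0 1) := by
    intro k
    by_cases h : k < n
    · simp only [f, extZ, h, dite_true]
      exact (EuclideanSpace.proj (𝕜 := ℝ) (⟨k, h⟩ : Fin n)).integrable_comp (hFi 0 (by omega))
    · simp only [f, extZ, h, dite_false]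
      exact integrableOn_zero
  have hfM : ∀ k, ∫ t in Set.Icc (0:ℝ) 1, |f k t| ≤ M := by
    intro k
    refine integral_mono (hfi k).abs (hFi 0 (by omega)).norm fun t => ?_
    by_cases h : k < n
    · simp only [f, extZ, h, dite_true]
      exact PiLp.norm_apply_le (F 0 t) ⟨k, h⟩
    · simp [f, extZ, h]
  have hZn : ∀ k, n ≤ k → ∀ t, Z k t = 0 := by
    intro k hk t
    simp [Z, extZ, not_lt.2 hk]
  have heq : ∀ k < n, ∀ t ∈ Set.Icc (0:ℝ) 1,
      Z k t = Z k 0 + ∫ s in (0:ℝ)..t, (Z (k + 1) s + f k s) := by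
    intro k hk t ht
    by_cases h : k + 1 < n
    · simpa [Z, f, extZ, hk, h] using hz1 ⟨k, hk⟩ h t ht
    · simpa [Z, f, extZ, hk, h] using hz2 ⟨k, hk⟩ (by simp; omega) t ht
  have key : ∀ k ≤ n, ∀ t ∈ Set.Icc (0:ℝ) 1,
      |Z k t - taylorP (n - k) (fun j => Z (k + j) 0) t| ≤ n * M := by
    intro k hk t ht
    have := chain_bound M (n - k) (fun j => Z (k + j)) (fun j => f (k + j)) (fun j => hZc _)
      (fun j => hfi _) (fun j => hfM _) (fun j hj => heq (k + j) (by omega))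
      (fun t _ => hZn _ (by omega) t) t ht
    refine this.trans ?_
    gcongr
    omega
  have hA : ‖(z 0 : Fin n → ℝ)‖ ≤ C * (Y + n * M) := by
    refine (hequiv _).trans ?_
    gcongr
    rw [intervalIntegral.integral_of_le zero_le_one, ← integral_Icc_eq_integral_Ioc]
    have hYi : IntegrableOn (fun t => |z t ⟨0, hn⟩|) (Set.Icc 0 1) := by
      apply ContinuousOn.integrableOn_Icc
      fun_prop
    have hci : IntegrableOn (fun _ : ℝ => (n * M : ℝ)) (Set.Icc 0 1) := by
      apply ContinuousOn.integrableOn_Icc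
      fun_prop
    have : (∫ t in Set.Icc (0:ℝ) 1, (|z t ⟨0, hn⟩| + n * M)) = Y + n * M := by
      rw [integral_add hYi hci]
      simp [hY]
    rw [← this]
    refine setIntegral_mono_on (taylorP_cont _ _).abs.continuousOn.integrableOn_Icc
      (hYi.add hci) measurableSet_Icc fun t ht => ?_
    have h0 := key 0 (by omega) t ht
    simp only [Nat.sub_zero, zero_add] at h0
    have e : Z 0 t = z t ⟨0, hn⟩ := by simp [Z, extZ, hn]
    rw [e] at h0
    change |taylorP n (fun j => Z j 0) t| ≤ _
    have := abs_sub_abs_le_abs_sub (taylorP n (fun j => Z j 0) t) (z t ⟨0, hn⟩)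
    rw [abs_sub_comm] at this
    linarith
  have hpt : ∀ t ∈ Set.Icc (0:ℝ) 1, ‖z t‖ ≤ n * (n * (C * (Y + n * M)) + n * M) := by
    intro t ht
    have hb : ∀ k, |Z k 0| ≤ C * (Y + n * M) := by
      intro k
      refine le_trans ?_ hA
      by_cases h : k < n
      · simp only [Z, extZ, h, dite_true]
        exact norm_le_pi_norm (z 0 : Fin n → ℝ) ⟨k, h⟩
      · simp [Z, extZ, h]
    have hk : ∀ i : Fin n, |z t i| ≤ n * (C * (Y + n * M)) + n * M := by
      intro i
      have h1 := key i i.2.le t ht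
      have e : Z i t = z t i := by simp [Z, extZ]
      rw [e] at h1
      have h2 := taylorP_le (n - i) (fun j => Z (i + j) 0) _ (fun j => hb _) t ht
      have h3 : ((n - i : ℕ) : ℝ) * (C * (Y + n * M)) ≤ n * (C * (Y + n * M)) := by
        gcongr
        omega
      have := abs_sub_abs_le_abs_sub (z t i) (taylorP (n - i) (fun j => Z (i + j) 0) t)
      linarith
    have hs : ‖z t‖ ≤ ∑ i, |z t i| := by
      rw [EuclideanSpace.norm_eq]
      refine Real.sqrt_le_iff.2 ⟨Finset.sum_nonneg fun _ _ => abs_nonneg _, ?_⟩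
      simp only [Real.norm_eq_abs]
      exact Finset.sum_sq_le_sq_sum_of_nonneg fun _ _ => abs_nonneg _
    refine hs.trans ((Finset.sum_le_sum fun i _ => hk i).trans ?_)
    rw [Finset.sum_const, Finset.card_univ, Fintype.card_fin, nsmul_eq_mul]
  have hfin : (∫ t in Set.Icc (0:ℝ) 1, ‖z t‖) ≤ n * (n * (C * (Y + n * M)) + n * M) := by
    have := setIntegral_mono_on (μ := volume) (hz.norm.integrableOn_Icc)
      (ContinuousOn.integrableOn_Icc (continuousOn_const
        (c := n * (n * (C * (Y + n * M)) + n * M))))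
      measurableSet_Icc hpt
    rw [setIntegral_const] at this
    refine this.trans_eq ?_
    simp
  refine hfin.trans ?_
  rw [mul_assoc]
  refine mul_le_mul_of_nonneg_left ?_ hn'.le
  set S := ∑ j ∈ Finset.range (n + 1), ∫ t in Set.Icc (0:ℝ) 1, ‖F j t‖
  have hS0 : 0 ≤ S := hM0.trans hMS
  have h1 : Y + n * M ≤ (1 + n) * (Y + S) := by
    have : (n:ℝ) * M ≤ n * S := by gcongr
    nlinarith [mul_nonneg hn'.le hY0]
  have h2 : n * (C * (Y + n * M)) ≤ n * (C * ((1 + n) * (Y + S))) := by gcongr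
  have h3 : n * M ≤ n * (Y + S) := by gcongr; linarith
  calc _ ≤ _ := add_le_add h2 h3
    _ = _ := by ring
end

section
/- Let A be an N×N real matrix, B ∈ ℝ^N, and let ρ : ℝ^N \ {0} → ℝ be twice continuously differentiable with ⟨∇ρ(x), A x⟩ = 0 for all x ≠ 0. Let x : I → ℝ^N be a differentiable curve on an interval I with x(t) ≠ 0 and ẋ(t) = A x(t) + B u(t) for a function u : I → ℝ, and set p(t) = ∇ρ(x(t)). Then p satisfies the adjoint-type equation ṗ(t) = − Aᵀ p(t) + (∂²ρ/∂x²)(x(t)) B u(t). -/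
open Matrix
open scoped RealInnerProductSpace

/-- **Adjoint-type equation for the momentum `p = ∇ρ(x)`.**
Let `ρ` be `C²` away from the origin with `⟪∇ρ(x), A x⟫ = 0` for `x ≠ 0`, and let
`x(·)` be a differentiable curve on an interval `I` with `x(t) ≠ 0` and
`ẋ = A x + B u`.  Then `p(t) = ∇ρ(x(t))` satisfies
`ṗ = − Aᵀ p + (∂²ρ/∂x²)(x) B u`. -/
theorem momentum_adjoint_equation
    (N : ℕ) (A : Matrix (Fin N) (Fin N) ℝ) (B : EuclideanSpace ℝ (Fin N))
    (ρ : EuclideanSpace ℝ (Fin N) → ℝ)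
    (hρ : ContDiffOn ℝ 2 ρ {x | x ≠ 0})
    (hinv : ∀ x : EuclideanSpace ℝ (Fin N), x ≠ 0 →
      ⟪gradient ρ x, Matrix.toEuclideanLin A x⟫ = 0)
    (I : Set ℝ) (hI : ∃ a b : ℝ, I = Set.Icc a b)
    (x : ℝ → EuclideanSpace ℝ (Fin N)) (u : ℝ → ℝ)
    (hx0 : ∀ t ∈ I, x t ≠ 0)
    (hx : ∀ t ∈ I, HasDerivAt x (Matrix.toEuclideanLin A (x t) + u t • B) t) :
    ∀ t ∈ I, HasDerivAt (fun s => gradient ρ (x s))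
      (- Matrix.toEuclideanLin Aᵀ (gradient ρ (x t)) +
        u t • fderiv ℝ (gradient ρ) (x t) B) t := by
  intro t ht
  have hy := hx0 t ht
  have hxt := hx t ht
  generalize hyd : x t = y at hy hxt
  have hopen : IsOpen {x : EuclideanSpace ℝ (Fin N) | x ≠ 0} := isOpen_ne
  have hc : ContDiffAt ℝ 2 ρ y := hρ.contDiffAt (hopen.mem_nhds hy)
  have hd2 : DifferentiableAt ℝ (fderiv ℝ ρ) y :=
    (hc.fderiv_right (m := 1) (by norm_num)).differentiableAt (by norm_num)
  have hsymm : IsSymmSndFDerivAt ℝ ρ y := hc.isSymmSndFDerivAt (by simp)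
  let L : (EuclideanSpace ℝ (Fin N) →L[ℝ] ℝ) →L[ℝ] EuclideanSpace ℝ (Fin N) :=
    { toFun := fun f => (InnerProductSpace.toDual ℝ (EuclideanSpace ℝ (Fin N))).symm f
      map_add' := fun f g => map_add _ f g
      map_smul' := fun c f => by simp
      cont := (InnerProductSpace.toDual ℝ (EuclideanSpace ℝ (Fin N))).symm.continuous }
  have hL : ∀ f v, ⟪L f, v⟫ = f v := fun f v => InnerProductSpace.toDual_symm_apply
  have hg : HasFDerivAt (gradient ρ) (L.comp (fderiv ℝ (fderiv ℝ ρ) y)) y :=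
    L.hasFDerivAt.comp y hd2.hasFDerivAt
  have hgy : ∀ v, fderiv ℝ (gradient ρ) y v = L (fderiv ℝ (fderiv ℝ ρ) y v) := by
    intro v; rw [hg.fderiv]; rfl
  let T : EuclideanSpace ℝ (Fin N) →L[ℝ] EuclideanSpace ℝ (Fin N) :=
    LinearMap.toContinuousLinearMap (Matrix.toEuclideanLin A)
  have hin : HasFDerivAt (fun z => ⟪gradient ρ z, T z⟫) _ y := hg.inner ℝ T.hasFDerivAt
  have hz : HasFDerivAt (fun z => ⟪gradient ρ z, T z⟫)
      (0 : EuclideanSpace ℝ (Fin N) →L[ℝ] ℝ) y := by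
    refine (hasFDerivAt_const (0 : ℝ) y).congr_of_eventuallyEq ?_
    filter_upwards [hopen.mem_nhds hy] with z hz
    exact hinv z hz
  have heq := hin.unique hz
  have key : ∀ v, ⟪gradient ρ y, T v⟫ + fderiv ℝ (fderiv ℝ ρ) y v (T y) = 0 := by
    intro v
    have := DFunLike.congr_fun heq v
    simpa [hL, fderivInnerCLM_apply] using this
  have hadj : ∀ p v, ⟪Matrix.toEuclideanLin Aᵀ p, v⟫ = ⟪p, T v⟫ := by
    intro p v
    have h := Matrix.toEuclideanLin_conjTranspose_eq_adjoint A
    rw [Matrix.conjTranspose_eq_transpose_of_trivial] at h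
    rw [h, LinearMap.adjoint_inner_left]
    rfl
  have hAy : L (fderiv ℝ (fderiv ℝ ρ) y (T y)) = - Matrix.toEuclideanLin Aᵀ (gradient ρ y) := by
    refine ext_inner_right ℝ fun v => ?_
    rw [hL, inner_neg_left, hadj, hsymm.eq (T y) v]
    linarith [key v]
  subst hyd
  have h := hg.comp_hasDerivAt t hxt
  have e : (L.comp (fderiv ℝ (fderiv ℝ ρ) (x t))) (Matrix.toEuclideanLin A (x t) + u t • B) =
      - Matrix.toEuclideanLin Aᵀ (gradient ρ (x t)) +
        u t • fderiv ℝ (gradient ρ) (x t) B := by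
    rw [hgy, ← hAy, map_add, map_smul]
    rfl
  rw [e] at h
  exact h
end

section
/- Let A be an n×n real matrix and B ∈ ℝ^n such that the pair (−Aᵀ, Bᵀ) is completely observable. Then there exist constants C₀ > 0 and c₁ > 0, depending only on A and B, such that: for every positive integer T and every absolutely continuous p : [0,T] → ℝ^n satisfying ṗ(t) = −Aᵀ p(t) + f(t) for almost every t, with |f(t)| ≤ 1/C₀ almost everywhere and |p(t)| ≥ 1 for all t ∈ [0,T], one has T ≤ c₁ ∫₀^T |⟨p(t), B⟩| dt. -/
open MeasureTheory Matrix
open scoped RealInnerProductSpace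

/-- Integral form of Gronwall for continuous functions. -/
lemma aux_gronwall_cont {g : ℝ → ℝ} (hg : Continuous g) {a b K ε : ℝ} (hK : 0 < K)
    (h : ∀ t ∈ Set.Icc a b, g t ≤ K * (∫ s in a..t, g s) + ε) :
    ∀ t ∈ Set.Icc a b, g t ≤ ε * Real.exp (K * (t - a)) := by
  intro t ht
  have hd : ∀ x, HasDerivAt (fun u => ∫ s in a..u, g s) (g x) x := fun x =>
    intervalIntegral.integral_hasDerivAt_right (hg.intervalIntegrable _ _)
      (hg.stronglyMeasurableAtFilter _ _) hg.continuousAt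
  have := le_gronwallBound_of_liminf_deriv_right_le (f := fun u => ∫ s in a..u, g s) (f' := g)
    (δ := 0) (K := K) (ε := ε) (a := a) (b := b)
    (fun x _ => (hd x).continuousAt.continuousWithinAt)
    (fun x _ r hr => (hd x).hasDerivWithinAt.liminf_right_slope_le hr) (by simp)
    (fun x hx => h x ⟨hx.1, hx.2.le⟩) t ht
  rw [gronwallBound_of_K_ne_0 hK.ne'] at this
  have h2 := h t ht
  have h3 := mul_le_mul_of_nonneg_left this hK.le
  have h4 : K * (0 * Real.exp (K * (t - a)) + ε / K * (Real.exp (K * (t - a)) - 1))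
      = ε * Real.exp (K * (t - a)) - ε := by field_simp; ring
  simp only at h3
  rw [h4] at h3
  linarith

lemma aux_gronwall {g : ℝ → ℝ} {a b K ε : ℝ} (hab : a ≤ b) (hg : ContinuousOn g (Set.Icc a b))
    (hK : 0 < K)
    (h : ∀ t ∈ Set.Icc a b, g t ≤ K * (∫ s in a..t, g s) + ε) :
    ∀ t ∈ Set.Icc a b, g t ≤ ε * Real.exp (K * (t - a)) := by
  have hc : Continuous (Set.IccExtend hab (Set.domRestrict (Set.Icc a b) g)) :=
    (continuousOn_iff_continuous_domRestrict.1 hg).Icc_extend'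
  have he : ∀ t ∈ Set.Icc a b, Set.IccExtend hab (Set.domRestrict (Set.Icc a b) g) t = g t :=
    fun t ht => by rw [Set.IccExtend_of_mem hab _ ht]; rfl
  intro t ht
  rw [← he t ht]
  refine aux_gronwall_cont hc hK (b := b) ?_ t ht
  intro u hu
  rw [he u hu, intervalIntegral.integral_congr (g := g)]
  · exact h u hu
  · intro s hs
    rw [Set.uIcc_of_le hu.1] at hs
    exact he s ⟨hs.1, hs.2.trans hu.2⟩

section
variable {E : Type*} [NormedAddCommGroup E] [InnerProductSpace ℝ E] [FiniteDimensional ℝ E]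

lemma aux_hasDeriv (M : E →L[ℝ] E) (v : E) (t : ℝ) :
    HasDerivAt (fun u : ℝ => NormedSpace.exp (u • M) v) (M (NormedSpace.exp (t • M) v)) t := by
  have : CompleteSpace E := FiniteDimensional.complete ℝ E
  have := (hasDerivAt_exp_smul_const' (𝕂 := ℝ) M t).clm_apply (hasDerivAt_const t v)
  simpa using this

lemma aux_hasDeriv2 (M : E →L[ℝ] E) (v : E) (t : ℝ) :
    HasDerivAt (fun u : ℝ => NormedSpace.exp (u • M) v) (NormedSpace.exp (t • M) (M v)) t := by
  have : CompleteSpace E := FiniteDimensional.complete ℝ E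
  have := (hasDerivAt_exp_smul_const (𝕂 := ℝ) M t).clm_apply (hasDerivAt_const t v)
  simpa using this

lemma aux_cont (M : E →L[ℝ] E) : Continuous (fun u : ℝ => NormedSpace.exp (u • M)) := by
  have : CompleteSpace E := FiniteDimensional.complete ℝ E
  exact continuous_iff_continuousAt.2 fun t =>
    (hasDerivAt_exp_smul_const' (𝕂 := ℝ) M t).continuousAt

lemma aux_obs_zero (M : E →L[ℝ] E) (B v : E)
    (h : ∀ t ∈ Set.Icc (0:ℝ) 1, ⟪NormedSpace.exp (t • M) v, B⟫ = 0) (k : ℕ) :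
    ∀ t ∈ Set.Icc (0:ℝ) 1, ⟪NormedSpace.exp (t • M) ((M ^ k) v), B⟫ = 0 := by
  induction k with
  | zero => simpa using h
  | succ k ih =>
    intro t ht
    have hd := (aux_hasDeriv2 M ((M ^ k) v) t).inner ℝ (hasDerivAt_const t B)
    have h1 := hd.hasDerivWithinAt (s := Set.Icc (0:ℝ) 1)
    have h2 : HasDerivWithinAt (fun u : ℝ => ⟪NormedSpace.exp (u • M) ((M ^ k) v), B⟫) 0
        (Set.Icc (0:ℝ) 1) t :=
      (hasDerivWithinAt_const t (Set.Icc (0:ℝ) 1) (0:ℝ)).congr ih (ih t ht)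
    have := (uniqueDiffOn_Icc (zero_lt_one' ℝ) t ht).eq_deriv _ h1 h2
    simpa [pow_succ'] using this

lemma aux_obs (M : E →L[ℝ] E) (B : E) (n : ℕ)
    (hobs : ∀ v : E, (∀ k < n, ⟪B, (M ^ k) v⟫ = 0) → v = 0) :
    ∃ γ > (0:ℝ), ∀ v : E, γ * ‖v‖ ≤ ∫ t in (0:ℝ)..1, |⟪NormedSpace.exp (t • M) v, B⟫| := by
  have hcM := aux_cont M
  rcases subsingleton_or_nontrivial E with hE | hE
  · refine ⟨1, one_pos, fun v => ?_⟩
    rw [Subsingleton.elim v 0]; simp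
  have hcont : Continuous fun v : E => ∫ t in (0:ℝ)..1, |⟪NormedSpace.exp (t • M) v, B⟫| := by
    apply intervalIntegral.continuous_parametric_intervalIntegral_of_continuous'
    simp only [Function.uncurry_def]
    have h1 : Continuous fun x : E × ℝ => NormedSpace.exp (x.2 • M) x.1 :=
      (hcM.comp continuous_snd).clm_apply continuous_fst
    fun_prop
  have : ProperSpace E := FiniteDimensional.proper ℝ E
  obtain ⟨v₀, hv₀, hmin⟩ := (isCompact_sphere (0:E) 1).exists_isMinOn
    (NormedSpace.sphere_nonempty.2 zero_le_one) hcont.continuousOn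
  have hv1 : ‖v₀‖ = 1 := by simpa using hv₀
  refine ⟨∫ t in (0:ℝ)..1, |⟪NormedSpace.exp (t • M) v₀, B⟫|, ?_, ?_⟩
  · have hc : Continuous fun t : ℝ => |⟪NormedSpace.exp (t • M) v₀, B⟫| := by
      have h1 : Continuous fun t : ℝ => NormedSpace.exp (t • M) v₀ :=
        hcM.clm_apply continuous_const
      fun_prop
    refine intervalIntegral.integral_pos one_pos hc.continuousOn (fun _ _ => abs_nonneg _) ?_
    by_contra! hcon
    have h0 : ∀ t ∈ Set.Icc (0:ℝ) 1, ⟪NormedSpace.exp (t • M) v₀, B⟫ = 0 := fun t ht =>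
      abs_eq_zero.1 (le_antisymm (hcon t ht) (abs_nonneg _))
    have : v₀ = 0 := hobs v₀ fun k _ => by
      have := aux_obs_zero M B v₀ h0 k 0 (by simp)
      rw [real_inner_comm]
      simpa using this
    rw [this] at hv1
    simp at hv1
  · intro v
    by_cases hv : v = 0
    · simp [hv]
    have hn : 0 < ‖v‖ := norm_pos_iff.2 hv
    have hm := hmin (show ‖v‖⁻¹ • v ∈ Metric.sphere (0:E) 1 by
      simp [norm_smul, hn.ne'])
    simp only [Set.mem_ofPred_eq, map_smul, inner_smul_left, abs_mul,
      intervalIntegral.integral_const_mul] at hm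
    have : |(starRingEnd ℝ) ‖v‖⁻¹| = ‖v‖⁻¹ := by simp
    rw [this] at hm
    calc _ ≤ _ := mul_le_mul_of_nonneg_right hm hn.le
      _ = _ := by field_simp

/-- One unit interval. -/
lemma aux_step (M : E →L[ℝ] E) (B : E) (γ ε : ℝ) (hε : 0 ≤ ε)
    (hγ : ∀ v : E, γ * ‖v‖ ≤ ∫ t in (0:ℝ)..1, |⟪NormedSpace.exp (t • M) v, B⟫|)
    (a : ℝ) (p f : ℝ → E) (hp : ContinuousOn p (Set.Icc a (a+1)))
    (hf : IntervalIntegrable f volume a (a+1))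
    (hpf : ∀ t ∈ Set.Icc a (a+1), p t = p a + ∫ s in a..t, (M (p s) + f s))
    (hfε : ∀ᵐ t, t ∈ Set.Icc a (a+1) → ‖f t‖ ≤ ε) :
    γ * ‖p a‖ - ε * Real.exp (‖M‖ + 1) * ‖B‖ ≤ ∫ t in a..(a+1), |⟪p t, B⟫| := by
  have : CompleteSpace E := FiniteDimensional.complete ℝ E
  have hab : a ≤ a + 1 := by linarith
  set q : ℝ → E := fun t => NormedSpace.exp ((t - a) • M) (p a) with hq
  have hqd : ∀ t, HasDerivAt q (M (q t)) t := fun t => by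
    have := (aux_hasDeriv M (p a) (t - a)).scomp t ((hasDerivAt_id t).sub_const a)
    rw [one_smul] at this
    exact this
  have hqc : Continuous q := continuous_iff_continuousAt.2 fun t => (hqd t).continuousAt
  have hqa : q a = p a := by simp [hq]
  have hqi : ∀ t, q t = p a + ∫ s in a..t, M (q s) := fun t => by
    rw [intervalIntegral.integral_eq_sub_of_hasDerivAt (fun x _ => hqd x)
      ((M.continuous.comp hqc).intervalIntegrable _ _), hqa]
    abel
  have hdc : ContinuousOn (fun t => p t - q t) (Set.Icc a (a+1)) := hp.sub hqc.continuousOn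
  have hsub : ∀ t ∈ Set.Icc a (a+1), Set.uIcc a t ⊆ Set.Icc a (a+1) := fun t ht => by
    rw [Set.uIcc_of_le ht.1]; exact Set.Icc_subset_Icc_right ht.2
  have hd : ∀ t ∈ Set.Icc a (a+1), ‖p t - q t‖ ≤ ε * Real.exp ((‖M‖ + 1) * (t - a)) := by
    refine aux_gronwall hab hdc.norm (by positivity) ?_
    intro t ht
    have hfi : IntervalIntegrable f volume a t := hf.mono_set (by
      rw [Set.uIcc_of_le hab]; exact hsub t ht)
    have hMp : IntervalIntegrable (fun s => M (p s)) volume a t :=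
      (M.continuous.comp_continuousOn (hp.mono (hsub t ht))).intervalIntegrable
    have hMq : IntervalIntegrable (fun s => M (q s)) volume a t :=
      (M.continuous.comp hqc).intervalIntegrable _ _
    have hdi : IntervalIntegrable (fun s => ‖p s - q s‖) volume a t :=
      (hdc.norm.mono (hsub t ht)).intervalIntegrable
    have e1 : p t - q t = ∫ s in a..t, (M (p s) + f s - M (q s)) := by
      rw [intervalIntegral.integral_sub (hMp.add hfi) hMq, hpf t ht, hqi t]
      abel
    rw [e1]
    have e2 : ‖∫ s in a..t, (M (p s) + f s - M (q s))‖
        ≤ ∫ s in a..t, ((‖M‖ + 1) * ‖p s - q s‖ + ε) := by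
      refine intervalIntegral.norm_integral_le_of_norm_le ht.1 ?_
        ((hdi.const_mul _).add intervalIntegrable_const)
      filter_upwards [hfε] with s hs hst
      have h1 := hs ⟨hst.1.le, hst.2.trans ht.2⟩
      have h2 : M (p s) + f s - M (q s) = M (p s - q s) + f s := by rw [map_sub]; abel
      rw [h2]
      have h3 := norm_add_le (M (p s - q s)) (f s)
      have h4 := M.le_opNorm (p s - q s)
      have h5 := norm_nonneg (p s - q s)
      linarith
    rw [intervalIntegral.integral_add (hdi.const_mul _) intervalIntegrable_const,
      intervalIntegral.integral_const_mul, intervalIntegral.integral_const, smul_eq_mul] at e2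
    have : (t - a) * ε ≤ 1 * ε := mul_le_mul_of_nonneg_right (by linarith [ht.2]) hε
    linarith
  have hqint : γ * ‖p a‖ ≤ ∫ t in a..(a+1), |⟪q t, B⟫| := by
    refine (hγ (p a)).trans_eq ?_
    have := intervalIntegral.integral_comp_sub_right (a := a) (b := a + 1)
      (fun t => |⟪NormedSpace.exp (t • M) (p a), B⟫|) a
    simp only [sub_self, add_sub_cancel_left] at this
    exact this.symm
  have hpi : IntervalIntegrable (fun t => |⟪p t, B⟫|) volume a (a+1) := by
    apply ContinuousOn.intervalIntegrable
    rw [Set.uIcc_of_le hab]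
    exact (hp.inner continuousOn_const).abs
  have hqi' : IntervalIntegrable (fun t => |⟪q t, B⟫|) volume a (a+1) :=
    (hqc.inner continuous_const).abs.intervalIntegrable _ _
  have := intervalIntegral.integral_mono_on hab hqi'
    (hpi.add (intervalIntegrable_const (c := ε * Real.exp (‖M‖ + 1) * ‖B‖))) (by
    intro t ht
    have h1 : ⟪q t, B⟫ = ⟪p t, B⟫ - ⟪p t - q t, B⟫ := by rw [inner_sub_left]; ring
    have h2 := abs_real_inner_le_norm (p t - q t) B
    have h3 : ‖p t - q t‖ ≤ ε * Real.exp (‖M‖ + 1) := (hd t ht).trans (by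
      apply mul_le_mul_of_nonneg_left _ hε
      apply Real.exp_le_exp.2
      have := norm_nonneg M
      nlinarith [ht.2])
    have h4 := mul_le_mul_of_nonneg_right h3 (norm_nonneg B)
    have h5 := abs_sub (⟪p t, B⟫) (⟪p t - q t, B⟫)
    rw [← h1] at h5
    linarith)
  rw [intervalIntegral.integral_add hpi intervalIntegrable_const,
    intervalIntegral.integral_const, smul_eq_mul] at this
  linarith

end

/-- **Lower bound for the observation of the perturbed adjoint system.**
If the pair `(−Aᵀ, Bᵀ)` is completely observable, there are constants `C₀ > 0`
and `c₁ > 0`, depending only on `A` and `B`, such that for every positive integer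
`T` and every absolutely continuous `p : [0,T] → ℝⁿ` with `ṗ = −Aᵀ p + f` a.e.,
`‖f‖ ≤ 1/C₀` a.e. and `‖p(t)‖ ≥ 1` on `[0,T]`, one has
`T ≤ c₁ ∫₀ᵀ |⟪p(t), B⟫| dt`. -/
theorem adjoint_observation_lower_bound
    (n : ℕ) (A : Matrix (Fin n) (Fin n) ℝ) (B : EuclideanSpace ℝ (Fin n))
    (hobs : ∀ v : EuclideanSpace ℝ (Fin n),
      (∀ k < n, ⟪B, Matrix.toEuclideanLin ((-Aᵀ) ^ k) v⟫ = 0) → v = 0) :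
    ∃ C₀ > (0:ℝ), ∃ c₁ > (0:ℝ), ∀ (T : ℕ), 0 < T →
      ∀ (p f : ℝ → EuclideanSpace ℝ (Fin n)),
        ContinuousOn p (Set.Icc 0 (T : ℝ)) →
        IntegrableOn f (Set.Icc 0 (T : ℝ)) →
        (∀ t ∈ Set.Icc (0:ℝ) (T : ℝ),
          p t = p 0 + ∫ s in (0:ℝ)..t, (- Matrix.toEuclideanLin Aᵀ (p s) + f s)) →
        (∀ᵐ t ∂(volume.restrict (Set.Icc (0:ℝ) (T : ℝ))), ‖f t‖ ≤ 1 / C₀) →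
        (∀ t ∈ Set.Icc (0:ℝ) (T : ℝ), 1 ≤ ‖p t‖) →
        (T : ℝ) ≤ c₁ * ∫ t in Set.Icc (0:ℝ) (T : ℝ), |⟪p t, B⟫| := by
  set M : EuclideanSpace ℝ (Fin n) →L[ℝ] EuclideanSpace ℝ (Fin n) :=
    Matrix.toEuclideanCLM (n := Fin n) (𝕜 := ℝ) (-Aᵀ) with hM
  have hMp : ∀ (k : ℕ) v, (M ^ k) v = Matrix.toEuclideanLin ((-Aᵀ) ^ k) v := fun k v => by
    rw [hM, ← map_pow]; rfl
  have hM1 : ∀ v, M v = - Matrix.toEuclideanLin Aᵀ v := fun v => by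
    have := hMp 1 v
    rw [pow_one, pow_one, map_neg] at this
    exact this
  obtain ⟨γ, hγ0, hγ⟩ := aux_obs M B n (fun v hv => hobs v fun k hk => by
    rw [← hMp]; exact hv k hk)
  set D : ℝ := Real.exp (‖M‖ + 1) * (‖B‖ + 1) with hD
  have hD0 : 0 < D := by positivity
  refine ⟨2 * D / γ, by positivity, 2 / γ, by positivity, ?_⟩
  intro T hT p f hp hf hpf hfε hp1
  rw [ae_restrict_iff' measurableSet_Icc] at hfε
  have hsubk : ∀ k < T, Set.Icc (k:ℝ) ((k:ℝ)+1) ⊆ Set.Icc (0:ℝ) T := fun k hk => by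
    have : (k:ℝ) + 1 ≤ T := by exact_mod_cast hk
    exact Set.Icc_subset_Icc (by positivity) this
  have hT0 : (0:ℝ) ≤ T := by positivity
  have hfI : IntervalIntegrable f volume 0 T :=
    (intervalIntegrable_iff_integrableOn_Icc_of_le hT0).2 hf
  have hpI : IntervalIntegrable (fun s => - Matrix.toEuclideanLin Aᵀ (p s)) volume 0 T := by
    simp only [← hM1]
    apply ContinuousOn.intervalIntegrable
    rw [Set.uIcc_of_le hT0]
    exact M.continuous.comp_continuousOn hp
  have hsI := hpI.add hfI
  have hstep : ∀ k < T, γ / 2 ≤ ∫ t in (k:ℝ)..((k + 1 : ℕ) : ℝ), |⟪p t, B⟫| := by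
    intro k hk
    have hs := hsubk k hk
    have hkk : (k:ℝ) ≤ k + 1 := by linarith
    have hkT : (k:ℝ) ∈ Set.Icc (0:ℝ) T := hs ⟨le_rfl, hkk⟩
    have := aux_step M B γ (1 / (2 * D / γ)) (by positivity) hγ k p f (hp.mono hs)
      (hfI.mono_set (by rw [Set.uIcc_of_le hkk, Set.uIcc_of_le hT0]; exact hs))
      (by
        intro t ht
        have htT := hs ht
        rw [hpf t htT, hpf k hkT, add_assoc]
        simp only [hM1]
        rw [intervalIntegral.integral_add_adjacent_intervals]
        · exact hsI.mono_set (by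
            rw [Set.uIcc_of_le hkT.1, Set.uIcc_of_le hT0]
            exact Set.Icc_subset_Icc_right hkT.2)
        · exact hsI.mono_set (by
            rw [Set.uIcc_of_le ht.1, Set.uIcc_of_le hT0]
            exact Set.Icc_subset_Icc hkT.1 htT.2))
      (by filter_upwards [hfε] with t ht h using ht (hs h))
    push_cast
    refine le_trans ?_ this
    have h1 := mul_le_mul_of_nonneg_left (hp1 k hkT) hγ0.le
    have h2 : 1 / (2 * D / γ) * Real.exp (‖M‖ + 1) * ‖B‖ ≤ γ / 2 := by
      have h3 : Real.exp (‖M‖ + 1) * ‖B‖ ≤ D := by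
        rw [hD]; gcongr; linarith
      calc _ = 1 / (2 * D / γ) * (Real.exp (‖M‖ + 1) * ‖B‖) := by ring
        _ ≤ 1 / (2 * D / γ) * D := by gcongr
        _ = γ / 2 := by field_simp
    linarith
  have hsum := intervalIntegral.sum_integral_adjacent_intervals (f := fun t => |⟪p t, B⟫|)
    (μ := volume) (a := fun k : ℕ => (k:ℝ)) (n := T) (fun k hk => by
      apply ContinuousOn.intervalIntegrable
      simp only [Nat.cast_add, Nat.cast_one]
      rw [Set.uIcc_of_le (by linarith)]
      exact ((hp.mono (hsubk k hk)).inner continuousOn_const).abs)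
  have hle : (T:ℝ) * (γ / 2) ≤ ∫ t in (0:ℝ)..T, |⟪p t, B⟫| := by
    have := Finset.card_nsmul_le_sum (Finset.range T)
      (fun k : ℕ => ∫ t in (k:ℝ)..((k + 1 : ℕ) : ℝ), |⟪p t, B⟫|) (γ / 2)
      (fun k hk => hstep k (Finset.mem_range.1 hk))
    rw [hsum] at this
    simpa using this
  rw [integral_Icc_eq_integral_Ioc, ← intervalIntegral.integral_of_le hT0]
  calc (T:ℝ) = 2 / γ * (T * (γ / 2)) := by field_simp
    _ ≤ _ := by gcongr
end
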